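/- arXiv:1210.0729 — 7 statements merged into one kernel-verified Lean document; each statement's English description precedes it below -/
import Mathlib

section
/- Suppose problem (P) is feasible (dom F ≠ ∅) and bounded (there exists v ∈ ℝ^q with F(x) ⊆ {v} + C for all x ∈ ℝⁿ). Then a solution to (P) exists: there is a nonempty finite set X̄ ⊆ dom F such that every element of X̄ is a minimizer for (P) and cl conv ⋃_{x ∈ X̄} (F(x) + C) = cl conv ⋃_{x ∈ ℝⁿ} (F(x) + C). -/
/-!
Write `G x = F x + C`. Fourier–Motzkin elimination shows that projections of polyhedra are
polyhedra (`PolyhedralSet.proj`). This has three consequences: the graph of `G` is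
polyhedral, the union `U` of all `G x` is polyhedral, and a linear functional that is bounded below on a nonempty
polyhedron attains its minimum (`PolyhedralSet.exists_min`).

*Domination by minimizers* (`exists_dominating`). Write `G x = {z | c i ≤ a i x + w i z for all i}`.
Given `x₀ ∈ dom F`, choose `z i ∈ G x₀` minimizing `w i` over `G x₀`, and solve the linear program
`min ∑ i, w i (y i)` over all `(x, y)` with `y i ∈ G x` and `w i (y i) ≤ w i (z i)`. Its value is
finite because `G x ⊆ v + C` and `w i ≥ 0` on `C`. At an optimal `(x̄, y)` the constraints give
`G x₀ ⊆ G x̄`, and a set `G x` strictly larger than `G x̄` would allow one `y i` to be improved.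

*Finitely many points suffice* (`PolyhedralSet.subset_hull_add`). Since `U ⊆ v + C` and `C` is
pointed, `U` contains no line and its recession directions lie in `C`; hence `U ⊆ conv V + C`, where `V` is the
finite set of vertices of `U`. Each vertex lies in some `G x`, hence in `G x̄` for a minimizer `x̄`,
and these finitely many `x̄` form a solution.
-/

open Matrix Set Pointwise

/-- A set is polyhedral convex: a finite intersection of closed halfspaces. -/
def IsPolyhedral {q : ℕ} (P : Set (Fin q → ℝ)) : Prop :=
  ∃ (m : ℕ) (w : Fin m → (Fin q → ℝ)) (γ : Fin m → ℝ),
    P = {y : Fin q → ℝ | ∀ i, γ i ≤ w i ⬝ᵥ y}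

/-- `x̄` is a minimizer for problem (P): `x̄ ∈ dom F` and there is no `x` with
`F(x) + C ⊇ F(x̄) + C` and `F(x) + C ≠ F(x̄) + C`. -/
def Minimizer {n q : ℕ} (F : (Fin n → ℝ) → Set (Fin q → ℝ))
    (C : Set (Fin q → ℝ)) (xbar : Fin n → ℝ) : Prop :=
  (F xbar).Nonempty ∧
    ¬ ∃ x : Fin n → ℝ, F xbar + C ⊆ F x + C ∧ F x + C ≠ F xbar + C

/-! ### Polyhedra and Fourier–Motzkin elimination -/

/-- Polyhedra in an arbitrary real vector space: solution sets of finitely many inequalities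
`c i ≤ f i x` with `f i` linear. -/
def PolyhedralSet {E : Type*} [AddCommGroup E] [Module ℝ E] (S : Set E) : Prop :=
  ∃ (ι : Type) (_ : Fintype ι) (f : ι → E →ₗ[ℝ] ℝ) (c : ι → ℝ), S = {x | ∀ i, c i ≤ f i x}

section PolyLemmas

variable {E E' : Type*} [AddCommGroup E] [Module ℝ E] [AddCommGroup E'] [Module ℝ E']

lemma PolyhedralSet.preimage {S : Set E} (hS : PolyhedralSet S) (g : E' →ₗ[ℝ] E) :
    PolyhedralSet (g ⁻¹' S) := by
  obtain ⟨ι, hι, f, c, rfl⟩ := hS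
  exact ⟨ι, hι, fun i => (f i).comp g, c, rfl⟩

lemma PolyhedralSet.inter {S T : Set E} (hS : PolyhedralSet S) (hT : PolyhedralSet T) :
    PolyhedralSet (S ∩ T) := by
  obtain ⟨ι, hι, f, c, rfl⟩ := hS
  obtain ⟨κ, hκ, g, d, rfl⟩ := hT
  refine ⟨ι ⊕ κ, inferInstance, Sum.elim f g, Sum.elim c d, ?_⟩
  ext x
  simp

lemma PolyhedralSet.iInter {κ : Type} [Fintype κ] {S : κ → Set E} (hS : ∀ k, PolyhedralSet (S k)) :
    PolyhedralSet (⋂ k, S k) := by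
  choose ι hι f c h using hS
  refine ⟨Σ k, ι k, inferInstance, fun p => f p.1 p.2, fun p => c p.1 p.2, ?_⟩
  ext x
  simp only [Set.mem_iInter, Set.mem_ofPred_eq, Sigma.forall]
  refine forall_congr' fun k => ?_
  rw [h k]
  rfl

lemma poly_ge (f : E →ₗ[ℝ] ℝ) (c : ℝ) : PolyhedralSet {x | c ≤ f x} :=
  ⟨Unit, inferInstance, fun _ => f, fun _ => c, by ext; simp⟩

lemma poly_le (f : E →ₗ[ℝ] ℝ) (c : ℝ) : PolyhedralSet {x | f x ≤ c} := by
  have h := poly_ge (-f) (-c)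
  simpa using h

lemma exists_between_finite {ι κ : Type*} [Finite ι] [Finite κ] (l : ι → ℝ) (u : κ → ℝ)
    (h : ∀ i j, l i ≤ u j) : ∃ t, (∀ i, l i ≤ t) ∧ ∀ j, t ≤ u j := by
  rcases isEmpty_or_nonempty ι with hι | hι
  · rcases isEmpty_or_nonempty κ with hκ | hκ
    · exact ⟨0, fun i => (hι.false i).elim, fun j => (hκ.false j).elim⟩
    · obtain ⟨j, hj⟩ := Finite.exists_min u
      exact ⟨u j, fun i => (hι.false i).elim, hj⟩
  · obtain ⟨i, hi⟩ := Finite.exists_max l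
    exact ⟨l i, hi, h i⟩

/-- One step of Fourier–Motzkin elimination: adding a line to a polyhedron gives a polyhedron. -/
lemma PolyhedralSet.add_line {S : Set E} (hS : PolyhedralSet S) (e : E) :
    PolyhedralSet {x | ∃ t : ℝ, x + t • e ∈ S} := by
  obtain ⟨ι, hι, f, c, rfl⟩ := hS
  -- Inequalities without `e`-component survive; one bounding `t` below and one bounding `t` above
  -- are combined so that the `e`-components cancel.
  refine ⟨{i // f i e = 0} ⊕ ({i // 0 < f i e} × {j // f j e < 0}),
    by classical exact inferInstance,
    Sum.elim (fun i => f i.1) (fun p => (f p.1.1 e) • f p.2.1 - (f p.2.1 e) • f p.1.1),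
    Sum.elim (fun i => c i.1) (fun p => (f p.1.1 e) * c p.2.1 - (f p.2.1 e) * c p.1.1), ?_⟩
  ext x
  simp only [Set.mem_ofPred_eq, map_add, map_smul, smul_eq_mul, Sum.forall, Sum.elim_inl,
    Sum.elim_inr, Prod.forall, Subtype.forall, LinearMap.sub_apply, LinearMap.smul_apply]
  constructor
  · rintro ⟨t, ht⟩
    refine ⟨fun i hi => by simpa [hi] using ht i, fun i hi j hj => ?_⟩
    nlinarith [mul_le_mul_of_nonneg_left (ht j) hi.le, mul_le_mul_of_nonpos_left (ht i) hj.le]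
  · rintro ⟨h0, h1⟩
    obtain ⟨t, hl, hu⟩ := exists_between_finite
      (fun i : {i // 0 < f i e} => (c i.1 - f i.1 x) / f i.1 e)
      (fun j : {j // f j e < 0} => (f j.1 x - c j.1) / (-f j.1 e))
      (by
        rintro ⟨i, hi⟩ ⟨j, hj⟩
        rw [div_le_div_iff₀ hi (by linarith)]
        have := h1 i hi j hj
        dsimp only
        nlinarith)
    refine ⟨t, fun i => ?_⟩
    rcases lt_trichotomy (f i e) 0 with hi | hi | hi
    · have := hu ⟨i, hi⟩
      rw [le_div_iff₀ (by simpa using hi)] at this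
      dsimp only at this
      linarith
    · rw [hi]
      simpa using h0 i hi
    · have := hl ⟨i, hi⟩
      rw [div_le_iff₀ hi] at this
      dsimp only at this
      linarith

lemma PolyhedralSet.add_span {S : Set E} (hS : PolyhedralSet S) (s : Finset E) :
    PolyhedralSet {x | ∃ w ∈ Submodule.span ℝ (s : Set E), x + w ∈ S} := by
  classical
  induction s using Finset.induction_on with
  | empty => simpa using hS
  | insert a s _ ih =>
    convert ih.add_line a using 1
    ext x
    simp only [Finset.coe_insert, Submodule.mem_span_insert, Set.mem_ofPred_eq]
    constructor
    · rintro ⟨_, ⟨t, z, hz, rfl⟩, h⟩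
      exact ⟨t, z, hz, by rwa [add_assoc]⟩
    · rintro ⟨t, z, hz, h⟩
      exact ⟨_, ⟨t, z, hz, rfl⟩, by rwa [← add_assoc]⟩

/-- Projections of polyhedra along finite-dimensional factors are polyhedra. -/
lemma PolyhedralSet.proj [Module.Finite ℝ E'] {S : Set (E × E')} (hS : PolyhedralSet S) :
    PolyhedralSet {x | ∃ y, (x, y) ∈ S} := by
  classical
  obtain ⟨s, hs⟩ := (Module.Finite.fg_top : (⊤ : Submodule ℝ E').FG)
  convert (hS.add_span (s.image (LinearMap.inr ℝ E E'))).preimage (LinearMap.inl ℝ E E') using 1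
  ext x
  simp only [Finset.coe_image, Submodule.span_image, hs, Set.mem_ofPred_eq, Set.mem_preimage,
    Submodule.mem_map, Submodule.mem_top, true_and]
  constructor
  · rintro ⟨y, hy⟩
    exact ⟨_, ⟨y, rfl⟩, by simpa using hy⟩
  · rintro ⟨_, ⟨y, rfl⟩, hy⟩
    exact ⟨y, by simpa using hy⟩

/-- Attainment in linear programming: the set of attained values is a polyhedron in `ℝ`, hence
closed. -/
lemma PolyhedralSet.exists_min [Module.Finite ℝ E] {S : Set E} (hS : PolyhedralSet S)
    (hne : S.Nonempty) (g : E →ₗ[ℝ] ℝ) (k : ℝ) (hk : ∀ x ∈ S, k ≤ g x) : ∃ x ∈ S, ∀ y ∈ S, g x ≤ g y := by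
  let d : ℝ × E →ₗ[ℝ] ℝ := LinearMap.fst ℝ ℝ E - g.comp (LinearMap.snd ℝ ℝ E)
  have hT := (((hS.preimage (LinearMap.snd ℝ ℝ E)).inter (poly_ge d 0)).inter (poly_le d 0)).proj
  have hTe : {t : ℝ | ∃ y, (t, y) ∈ (((LinearMap.snd ℝ ℝ E) ⁻¹' S) ∩ {x | 0 ≤ d x}) ∩
      {x | d x ≤ 0}} = g '' S := by
    ext t
    constructor
    · rintro ⟨y, ⟨hy, h1⟩, h2⟩
      refine ⟨y, hy, ?_⟩
      simp [d] at h1 h2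
      linarith
    · rintro ⟨y, hy, rfl⟩
      exact ⟨y, ⟨hy, by simp [d]⟩, by simp [d]⟩
  rw [hTe] at hT
  have hcl : IsClosed (g '' S) := by
    obtain ⟨ι, _, f, c, h⟩ := hT
    rw [h, Set.ofPred_forall]
    exact isClosed_iInter fun i =>
      isClosed_le continuous_const (f i).continuous_of_finiteDimensional
  have hb : BddBelow (g '' S) := ⟨k, by rintro _ ⟨x, hx, rfl⟩; exact hk x hx⟩
  obtain ⟨x, hx, hxe⟩ := hcl.csInf_mem (hne.image g) hb
  exact ⟨x, hx, fun y hy => hxe ▸ csInf_le hb ⟨y, hy, rfl⟩⟩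

end PolyLemmas

lemma nonneg_of_ray {k a b : ℝ} (h : ∀ t : ℝ, 0 ≤ t → k ≤ a + t * b) : 0 ≤ b := by
  by_contra hb
  push Not at hb
  have h1 := h ((|k - a| + 1) / (-b)) (div_nonneg (by positivity) (by linarith))
  have h2 : (|k - a| + 1) / (-b) * b = -(|k - a| + 1) := by
    rw [div_mul_eq_mul_div, div_eq_iff (by linarith)]
    ring
  rw [h2] at h1
  linarith [neg_abs_le (k - a)]

/-! ### Vertices -/

section Vertices

variable {E : Type*} [AddCommGroup E] [Module ℝ E]

/-- Moving from a point of a polyhedron along a direction that keeps the active constraints active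
either never leaves the polyhedron or reaches a point with strictly fewer inactive constraints. -/
lemma blocked {ι : Type} [Fintype ι] (f : ι → E →ₗ[ℝ] ℝ) (c : ι → ℝ) (y d : E)
    (hy : ∀ i, c i ≤ f i y) (hd : ∀ i, f i y = c i → f i d = 0) :
    (∀ i, 0 ≤ f i d) ∨ ∃ t : ℝ, 0 < t ∧ (∀ i, c i ≤ f i (y + t • d)) ∧
      {i | f i (y + t • d) ≠ c i}.ncard < {i | f i y ≠ c i}.ncard := by
  by_cases hall : ∀ i, 0 ≤ f i d
  · exact Or.inl hall
  right
  push Not at hall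
  obtain ⟨i0, hi0⟩ := hall
  have : Nonempty {i // f i d < 0} := ⟨⟨i0, hi0⟩⟩
  obtain ⟨⟨i, hi⟩, hmin⟩ := Finite.exists_min
    (fun i : {i // f i d < 0} => (f i.1 y - c i.1) / (-f i.1 d))
  have hne : f i y ≠ c i := fun h => hi.ne (hd i h)
  have hlt : c i < f i y := lt_of_le_of_ne (hy i) (Ne.symm hne)
  have hpos : 0 < (f i y - c i) / (-f i d) := div_pos (by linarith) (by linarith)
  refine ⟨(f i y - c i) / (-f i d), hpos, fun j => ?_, ?_⟩
  · rw [map_add, map_smul, smul_eq_mul]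
    rcases lt_or_ge (f j d) 0 with hj | hj
    · have := hmin ⟨j, hj⟩
      rw [le_div_iff₀ (by simpa using hj)] at this
      dsimp only at this
      linarith
    · have := mul_nonneg hpos.le hj
      linarith [hy j]
  · apply Set.ncard_lt_ncard _ (Set.toFinite _)
    refine ⟨fun j hj hj' => hj ?_, fun hsub => hsub hne ?_⟩
    · simp [hd j hj', hj']
    · rw [map_add, map_smul, smul_eq_mul]
      have : (f i y - c i) / (-f i d) * f i d = -(f i y - c i) := by
        rw [div_mul_eq_mul_div, div_eq_iff (by linarith)]
        ring
      rw [this]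
      ring

/-- A polyhedron whose recession directions lie in a pointed convex cone `C` is contained in
`conv V + C` for a finite set `V` of its points (its vertices). -/
lemma PolyhedralSet.subset_hull_add {U C : Set E} (hU : PolyhedralSet U) (hC : Convex ℝ C)
    (hadd : ∀ a ∈ C, ∀ b ∈ C, a + b ∈ C) (hcone : ∀ c ∈ C, ∀ r : ℝ, 0 ≤ r → r • c ∈ C)
    (h0 : (0 : E) ∈ C) (hpt : ∀ d ∈ C, -d ∈ C → d = 0)
    (hrec : ∀ y ∈ U, ∀ d, (∀ t : ℝ, 0 ≤ t → y + t • d ∈ U) → d ∈ C) :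
    ∃ V : Set E, V.Finite ∧ V ⊆ U ∧ U ⊆ convexHull ℝ V + C := by
  obtain ⟨ι, _, f, c, rfl⟩ := hU
  set V : Set E := {y | (∀ i, c i ≤ f i y) ∧ ∀ d, (∀ i, f i y = c i → f i d = 0) → d = 0} with hV
  refine ⟨V, ?_, fun y hy => hy.1, ?_⟩
  · -- A vertex is determined by its set of active constraints.
    refine Set.Finite.of_finite_image (f := fun y => {i | f i y = c i}) (Set.toFinite _) ?_
    intro y hy y' hy' h
    refine sub_eq_zero.mp (hy.2 (y - y') fun i hi => ?_)
    have : i ∈ {i | f i y' = c i} := by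
      rw [← show {i | f i y = c i} = {i | f i y' = c i} from h]
      exact hi
    rw [map_sub, hi, show f i y' = c i from this, sub_self]
  have hconv : Convex ℝ (convexHull ℝ V + C) := (convex_convexHull ℝ V).add hC
  have key : ∀ N : ℕ, ∀ y, (∀ i, c i ≤ f i y) → {i | f i y ≠ c i}.ncard = N →
      y ∈ convexHull ℝ V + C := by
    intro N
    induction N using Nat.strong_induction_on with
    | _ N ih =>
    intro y hy hN
    by_cases hv : ∀ d, (∀ i, f i y = c i → f i d = 0) → d = 0
    · exact ⟨y, subset_convexHull ℝ V ⟨hy, hv⟩, 0, h0, add_zero y⟩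
    push Not at hv
    obtain ⟨d, hd, hd0⟩ := hv
    have hrec' : ∀ d, (∀ i, 0 ≤ f i d) → d ∈ C := fun d hd =>
      hrec y hy d fun t ht i => by
        rw [map_add, map_smul, smul_eq_mul]
        linarith [hy i, mul_nonneg ht (hd i)]
    have shift : ∀ (z : E) (t : ℝ) (d : E), 0 ≤ t → d ∈ C → z - t • d ∈ convexHull ℝ V + C →
        z ∈ convexHull ℝ V + C := by
      rintro z t d ht hd ⟨a, ha, b, hb, hab⟩
      refine ⟨a, ha, b + t • d, hadd _ hb _ (hcone _ hd _ ht), ?_⟩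
      dsimp only at hab ⊢
      rw [← add_assoc, hab, sub_add_cancel]
    rcases blocked f c y d hy hd with h1 | ⟨t, ht, h1, h1'⟩
    · rcases blocked f c y (-d) hy (fun i hi => by simp [hd i hi]) with h2 | ⟨s, hs, h2, h2'⟩
      · exact absurd (hpt d (hrec' d h1) (hrec' _ h2)) hd0
      · have := ih _ (hN ▸ h2') _ h2 rfl
        exact shift y s d hs.le (hrec' d h1) (by simpa [sub_eq_add_neg] using this)
    · have m1 := ih _ (hN ▸ h1') _ h1 rfl
      rcases blocked f c y (-d) hy (fun i hi => by simp [hd i hi]) with h2 | ⟨s, hs, h2, h2'⟩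
      · exact shift y t (-d) ht.le (hrec' _ h2) (by simpa [sub_eq_add_neg] using m1)
      · have m2 := ih _ (hN ▸ h2') _ h2 rfl
        have := hconv m1 m2 (a := s / (s + t)) (b := t / (s + t)) (by positivity) (by positivity)
          (by field_simp)
        convert this using 1
        have e1 : s / (s + t) + t / (s + t) = 1 := by field_simp
        have e2 : s / (s + t) * t - t / (s + t) * s = 0 := by ring
        calc y = (s / (s + t) + t / (s + t)) • y + (s / (s + t) * t - t / (s + t) * s) • d := by
              rw [e1, e2]; simp
          _ = _ := by module
  exact fun y hy => key _ y hy rfl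

end Vertices

/-! ### Domination by minimizers -/

/-- If the graph of `G` is polyhedral, and all sets `G x` are invariant under adding `C` and lie in
`v + C`, then every nonempty `G x₀` is contained in an inclusion-maximal `G x̄`. -/
lemma exists_dominating {X Y : Type*} [AddCommGroup X] [Module ℝ X] [Module.Finite ℝ X]
    [AddCommGroup Y] [Module ℝ Y] [Module.Finite ℝ Y] (G : X → Set Y) (C : Set Y) (v : Y)
    (hG : PolyhedralSet {p : X × Y | p.2 ∈ G p.1}) (hcone : ∀ c ∈ C, ∀ r : ℝ, 0 ≤ r → r • c ∈ C)
    (hGC : ∀ x, ∀ y ∈ G x, ∀ c ∈ C, y + c ∈ G x) (hv : ∀ x, ∀ y ∈ G x, y - v ∈ C)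
    (x0 : X) (hx0 : (G x0).Nonempty) :
    ∃ x, G x0 ⊆ G x ∧ ∀ x', G x ⊆ G x' → G x' ⊆ G x := by
  classical
  have hGpoly := hG
  obtain ⟨ι, _, f, c, hf⟩ := hG
  have hmem : ∀ x y, y ∈ G x ↔ ∀ i, c i ≤ f i (x, 0) + f i (0, y) := by
    intro x y
    have h1 : (x, y) ∈ {p : X × Y | p.2 ∈ G p.1} ↔ (x, y) ∈ {p | ∀ i, c i ≤ f i p} := by rw [hf]
    have h2 : ∀ i, f i (x, y) = f i (x, 0) + f i (0, y) := fun i => by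
      rw [← map_add]; simp
    simpa [h2] using h1
  let w : ι → Y →ₗ[ℝ] ℝ := fun i => (f i).comp (LinearMap.inr ℝ X Y)
  have hw : ∀ i y, f i (0, y) = w i y := fun i y => rfl
  simp only [hw] at hmem
  have hwC : ∀ i, ∀ d ∈ C, 0 ≤ w i d := by
    intro i d hd
    obtain ⟨y, hy⟩ := hx0
    refine nonneg_of_ray (k := c i) (a := f i (x0, 0) + w i y) fun t ht => ?_
    have := (hmem _ _).1 (hGC x0 y hy _ (hcone d hd t ht)) i
    rw [map_add, map_smul, smul_eq_mul] at this
    linarith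
  have hwb : ∀ i x, ∀ y ∈ G x, w i v ≤ w i y := by
    intro i x y hy
    have := hwC i _ (hv x y hy)
    rw [map_sub] at this
    linarith
  have hGx0 : PolyhedralSet (G x0) := by
    refine ⟨ι, inferInstance, w, fun i => c i - f i (x0, 0), ?_⟩
    ext y
    simp only [hmem, Set.mem_ofPred_eq, sub_le_iff_le_add']
  have hz : ∀ i, ∃ z ∈ G x0, ∀ y ∈ G x0, w i z ≤ w i y := fun i =>
    hGx0.exists_min hx0 (w i) (w i v) (hwb i x0)
  choose z hzG hzmin using hz
  -- The feasible set of the linear program.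
  let pr : ι → X × (ι → Y) →ₗ[ℝ] Y := fun i =>
    (LinearMap.proj i : (ι → Y) →ₗ[ℝ] Y).comp (LinearMap.snd ℝ X (ι → Y))
  let S : Set (X × (ι → Y)) := ⋂ i, (((LinearMap.fst ℝ X (ι → Y)).prod (pr i)) ⁻¹'
    {p : X × Y | p.2 ∈ G p.1} ∩ {p | (w i).comp (pr i) p ≤ w i (z i)})
  have hS : PolyhedralSet S := PolyhedralSet.iInter fun i => (hGpoly.preimage _).inter (poly_le _ _)
  have hSmem : ∀ x y, (x, y) ∈ S ↔ ∀ i, y i ∈ G x ∧ w i (y i) ≤ w i (z i) := by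
    intro x y
    simp [S, pr]
  let g : X × (ι → Y) →ₗ[ℝ] ℝ := ∑ i, (w i).comp (pr i)
  have hg : ∀ x y, g (x, y) = ∑ i, w i (y i) := by
    intro x y
    simp [g, pr]
  obtain ⟨⟨x, y⟩, hxy, hmin⟩ := hS.exists_min
    ⟨(x0, z), (hSmem _ _).2 fun i => ⟨hzG i, le_rfl⟩⟩ g (∑ i, w i v) (by
      rintro ⟨x, y⟩ h
      rw [hg]
      exact Finset.sum_le_sum fun i _ => hwb i x _ ((hSmem _ _).1 h i).1)
  rw [hSmem] at hxy
  refine ⟨x, fun u hu => (hmem _ _).2 fun i => ?_, fun x' hx' u hu => ?_⟩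
  · have h1 := (hmem _ _).1 (hxy i).1 i
    linarith [(hxy i).2, hzmin i u hu]
  · by_contra hne
    rw [hmem] at hne
    push Not at hne
    obtain ⟨i, hi⟩ := hne
    have h1 := (hmem _ _).1 (hxy i).1 i
    have hlt : w i u < w i (y i) := by linarith
    -- Replacing `y i` by `u` improves the objective.
    have h2 := hmin (x', Function.update y i u) ((hSmem _ _).2 fun j => by
      by_cases hj : j = i
      · subst hj
        simpa using ⟨hu, hlt.le.trans (hxy j).2⟩
      · simpa [hj] using ⟨hx' (hxy j).1, (hxy j).2⟩)
    rw [hg, hg] at h2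
    refine absurd h2 (not_le.2 (Finset.sum_lt_sum (fun j _ => ?_) ⟨i, Finset.mem_univ i, ?_⟩))
    · by_cases hj : j = i
      · subst hj
        simpa using hlt.le
      · simp [hj]
    · simpa using hlt

/-! ### Existence of solutions -/

/-- If (P) is feasible and bounded, then a solution to (P) exists: a nonempty finite
set `X̄ ⊆ dom F` consisting of minimizers only, in which the infimum is attained. -/
theorem solution_exists
    (n q : ℕ) (hn : 0 < n) (hq : 0 < q)
    -- C is a pointed polyhedral convex cone with nonempty interior
    (C : Set (Fin q → ℝ))
    (hCpoly : IsPolyhedral C)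
    (hCcone : ∀ c ∈ C, ∀ r : ℝ, 0 ≤ r → r • c ∈ C)
    (hCpointed : C ∩ (-C) = {0})
    (hCint : (interior C).Nonempty)
    -- F has polyhedral convex graph, given by Ax + By ≥ b
    (F : (Fin n → ℝ) → Set (Fin q → ℝ))
    (m : ℕ) (A : Matrix (Fin m) (Fin n) ℝ) (B : Matrix (Fin m) (Fin q) ℝ)
    (b : Fin m → ℝ)
    (hgr : ∀ x y, y ∈ F x ↔ b ≤ A *ᵥ x + B *ᵥ y)
    -- (P) is feasible and bounded
    (hfeas : ∃ x, (F x).Nonempty)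
    (hbdd : ∃ v : Fin q → ℝ, ∀ x, F x ⊆ {v} + C) :
    ∃ Xbar : Finset (Fin n → ℝ), Xbar.Nonempty ∧
      (∀ x ∈ Xbar, Minimizer F C x) ∧
      closure (convexHull ℝ (⋃ x ∈ Xbar, (F x + C))) =
        closure (convexHull ℝ (⋃ x : Fin n → ℝ, (F x + C))) := by
  classical
  obtain ⟨v, hv⟩ := hbdd
  obtain ⟨k, w, γ, hCeq⟩ := hCpoly
  have h0 : (0 : Fin q → ℝ) ∈ C := by
    have : (0 : Fin q → ℝ) ∈ C ∩ (-C) := by rw [hCpointed]; rfl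
    exact this.1
  have hCmem : ∀ y, y ∈ C ↔ ∀ i, γ i ≤ w i ⬝ᵥ y := fun y => by rw [hCeq]; rfl
  -- As `C` is a cone, the right-hand sides of its description may be replaced by `0`.
  have hCnn : ∀ y, y ∈ C ↔ ∀ i, 0 ≤ w i ⬝ᵥ y := by
    intro y
    constructor
    · intro hy i
      refine nonneg_of_ray (k := γ i) (a := 0) fun t ht => ?_
      simpa using (hCmem _).1 (hCcone y hy t ht) i
    · intro hy
      refine (hCmem _).2 fun i => le_trans ?_ (hy i)
      simpa using (hCmem 0).1 h0 i
  have hadd : ∀ a ∈ C, ∀ b ∈ C, a + b ∈ C := by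
    intro a ha b hb
    rw [hCnn] at *
    intro i
    rw [dotProduct_add]
    exact add_nonneg (ha i) (hb i)
  have hCconv : Convex ℝ C := fun a ha b hb r s hr hs _ =>
    hadd _ (hCcone a ha r hr) _ (hCcone b hb s hs)
  have hpt : ∀ d ∈ C, -d ∈ C → d = 0 := by
    intro d hd hd'
    have : d ∈ C ∩ (-C) := ⟨hd, hd'⟩
    rw [hCpointed] at this
    exact this
  have hCP : PolyhedralSet C :=
    ⟨Fin k, inferInstance, fun i => dotProductBilin ℝ ℝ (w i), γ, hCeq⟩
  let G : (Fin n → ℝ) → Set (Fin q → ℝ) := fun x => F x + C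
  have hGC : ∀ x, ∀ y ∈ G x, ∀ c ∈ C, y + c ∈ G x := by
    rintro x _ ⟨a, ha, b, hb, rfl⟩ c hc
    exact ⟨a, ha, b + c, hadd _ hb _ hc, (add_assoc a b c).symm⟩
  have hGv : ∀ x, ∀ y ∈ G x, y - v ∈ C := by
    rintro x _ ⟨a, ha, b, hb, rfl⟩
    obtain ⟨_, rfl, c, hc, rfl⟩ := hv x ha
    dsimp only
    have := hadd _ hc _ hb
    convert this using 1
    abel
  have hFP : PolyhedralSet {p : (Fin n → ℝ) × (Fin q → ℝ) | p.2 ∈ F p.1} := by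
    refine ⟨Fin m, inferInstance, fun i => (LinearMap.proj i).comp
      (A.mulVecLin.comp (LinearMap.fst ℝ _ _) + B.mulVecLin.comp (LinearMap.snd ℝ _ _)), b, ?_⟩
    ext ⟨x, y⟩
    simp [hgr, Pi.le_def]
  have hGP : PolyhedralSet {p : (Fin n → ℝ) × (Fin q → ℝ) | p.2 ∈ G p.1} := by
    let X := Fin n → ℝ
    let Y := Fin q → ℝ
    let fx : (X × Y) × Y →ₗ[ℝ] X := (LinearMap.fst ℝ X Y).comp (LinearMap.fst ℝ (X × Y) Y)
    let fz : (X × Y) × Y →ₗ[ℝ] Y := (LinearMap.snd ℝ X Y).comp (LinearMap.fst ℝ (X × Y) Y)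
    let fy : (X × Y) × Y →ₗ[ℝ] Y := LinearMap.snd ℝ (X × Y) Y
    have h := ((hFP.preimage (fx.prod fy)).inter (hCP.preimage (fz - fy))).proj
    convert h using 1
    ext ⟨x, z⟩
    constructor
    · rintro ⟨a, ha, c, hc, hac⟩
      refine ⟨a, ha, ?_⟩
      have : z - a = c := by
        rw [← show a + c = z from hac]
        exact add_sub_cancel_left a c
      change z - a ∈ C
      rwa [this]
    · rintro ⟨a, ha, hc⟩
      exact ⟨a, ha, z - a, hc, add_sub_cancel a z⟩
  have hdom : ∀ x0, (G x0).Nonempty → ∃ x, G x0 ⊆ G x ∧ Minimizer F C x := by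
    intro x0 hx0
    obtain ⟨x, hx, hmax⟩ := exists_dominating G C v hGP hCcone hGC hGv x0 hx0
    refine ⟨x, hx, ?_, ?_⟩
    · obtain ⟨_, a, ha, _⟩ := hx0.mono hx
      exact ⟨a, ha⟩
    · rintro ⟨x', h1, h2⟩
      exact h2 (Set.Subset.antisymm (hmax x' h1) h1)
  have hUP : PolyhedralSet (⋃ x, G x) := by
    have h := (hGP.preimage ((LinearMap.snd ℝ (Fin q → ℝ) (Fin n → ℝ)).prod
      (LinearMap.fst ℝ (Fin q → ℝ) (Fin n → ℝ)))).proj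
    convert h using 1
    ext y
    simp
  obtain ⟨V, hVfin, hVU, hUV⟩ := hUP.subset_hull_add hCconv hadd hCcone h0 hpt (by
    intro y _ d hd
    rw [hCnn]
    intro i
    refine nonneg_of_ray (k := 0) (a := w i ⬝ᵥ (y - v)) fun t ht => ?_
    obtain ⟨x, hx⟩ := Set.mem_iUnion.1 (hd t ht)
    have := (hCnn _).1 (hGv x _ hx) i
    rw [add_sub_right_comm, dotProduct_add, dotProduct_smul, smul_eq_mul] at this
    exact this)
  have hVx : ∀ y : V, ∃ x, y.1 ∈ G x ∧ Minimizer F C x := by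
    rintro ⟨y, hy⟩
    obtain ⟨x0, hx0⟩ := Set.mem_iUnion.1 (hVU hy)
    obtain ⟨x, hx, hm⟩ := hdom x0 ⟨y, hx0⟩
    exact ⟨x, hx hx0, hm⟩
  choose φ hφ hφm using hVx
  have : Fintype V := hVfin.fintype
  refine ⟨Finset.univ.image φ, ?_, ?_, ?_⟩
  · obtain ⟨x, a, ha⟩ := hfeas
    have hmem : a ∈ ⋃ x, G x := Set.mem_iUnion.2 ⟨x, a, ha, 0, h0, add_zero a⟩
    obtain ⟨y, hy, _⟩ := hUV hmem
    obtain ⟨p, hp⟩ := convexHull_nonempty_iff.1 ⟨y, hy⟩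
    exact ⟨φ ⟨p, hp⟩, Finset.mem_image_of_mem _ (Finset.mem_univ _)⟩
  · intro x hx
    obtain ⟨y, _, rfl⟩ := Finset.mem_image.1 hx
    exact hφm y
  · apply Set.Subset.antisymm
    · refine closure_mono (convexHull_mono ?_)
      exact Set.iUnion₂_subset fun x _ => Set.subset_iUnion (fun x => F x + C) x
    · refine closure_mono (convexHull_min ?_ (convex_convexHull ℝ _))
      refine hUV.trans ?_
      rw [← hCconv.convexHull_eq, ← convexHull_add, hCconv.convexHull_eq]
      refine convexHull_mono ?_
      rintro _ ⟨y, hy, c, hc, rfl⟩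
      exact Set.mem_iUnion₂.2 ⟨φ ⟨y, hy⟩, Finset.mem_image_of_mem _ (Finset.mem_univ _),
        hGC _ _ (hφ ⟨y, hy⟩) c hc⟩
end

section
/- Suppose problem (P) is feasible and bounded. Then every finite infimizer for (P) contains a pre-solution to (P): if X̄ ⊆ dom F is a finite infimizer, then there exist points x¹,…,x^r ∈ X̄ and y¹ ∈ F(x¹),…,y^r ∈ F(x^r) such that {(x¹,y¹),…,(x^r,y^r)} is a solution of the vectorial relaxation (VR). -/
/-!
Every fibre `F x` is a polyhedron contained in a translate of the pointed closed cone `C`. Such a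
polyhedron is contained in `conv V + C` for a finite subset `V` of itself
(`polyhedron_subset_hull_add_cone`): moving from a point along a direction outside `C` must hit a
further constraint, so one can induct on the number of tight constraints, as in the
Minkowski–Weyl decomposition. Taking the union of these sets over the finite infimizer gives a
finite `V ⊆ ⋃ x ∈ Xbar, F x` with `Y ⊆ conv V + C`, because `conv V + C` is closed and convex.

Among all such `V` take one of least cardinality. If some `y ∈ V` were not `C`-minimal, then
`y = p + c` with `p ∈ conv V` and `c ∈ C \ {0}`; solving for `y` puts it in `conv (V \ {y}) + C`, so
`y` could be removed from `V`, a contradiction. Hence `V` consists of minimal points.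
-/

open Matrix Set Pointwise

/-- `F` has a polyhedral convex graph, i.e. the graph is given by finitely many
linear inequalities `Ax + By ≥ b`. -/
def PolyhedralGraph (n q : ℕ) (F : (Fin n → ℝ) → Set (Fin q → ℝ)) : Prop :=
  ∃ (m : ℕ) (A : Matrix (Fin m) (Fin n) ℝ) (B : Matrix (Fin m) (Fin q) ℝ)
    (b : Fin m → ℝ), ∀ x y, y ∈ F x ↔ b ≤ A *ᵥ x + B *ᵥ y

/-- A direction along which a closed cone, translated, contains a whole ray lies in the cone. -/
lemma direction_mem_of_ray {q : ℕ} {C : Set (Fin q → ℝ)} (hcl : IsClosed C)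
    (hcone : ∀ c ∈ C, ∀ r : ℝ, 0 ≤ r → r • c ∈ C) (a d : Fin q → ℝ)
    (h : ∀ t : ℝ, 0 ≤ t → a + t • d ∈ C) : d ∈ C := by
  have hlim : Filter.Tendsto (fun k : ℕ => (1 / ((k : ℝ) + 1)) • a + d) Filter.atTop
      (nhds d) := by
    have h1 := (tendsto_one_div_add_atTop_nhds_zero_nat (𝕜 := ℝ)).smul_const a
    simpa using h1.add_const d
  refine hcl.mem_of_tendsto hlim (Filter.Eventually.of_forall fun k => ?_)
  have hk : (0 : ℝ) < (k : ℝ) + 1 := by positivity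
  have h2 := hcone _ (h ((k : ℝ) + 1) hk.le) (1 / ((k : ℝ) + 1)) (by positivity)
  rw [smul_add, smul_smul, one_div_mul_cancel hk.ne', one_smul] at h2
  exact h2

/-- From a point of a polyhedron, a direction that decreases some constraint function leads to a
point of the polyhedron at which such a constraint is tight. -/
lemma exists_exit {q m : ℕ} (w : Fin m → Fin q → ℝ) (γ : Fin m → ℝ) (y d : Fin q → ℝ)
    (hy : ∀ i, γ i ≤ w i ⬝ᵥ y) (hd : ∃ i, w i ⬝ᵥ d < 0) :
    ∃ t : ℝ, 0 ≤ t ∧ (∀ i, γ i ≤ w i ⬝ᵥ (y + t • d)) ∧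
      ∃ j, w j ⬝ᵥ d < 0 ∧ w j ⬝ᵥ (y + t • d) = γ j := by
  classical
  obtain ⟨i₀, hi₀⟩ := hd
  -- The step length is the smallest ratio of slack to rate of decrease.
  obtain ⟨j, hj, hmin⟩ := Finset.exists_min_image
    (Finset.univ.filter fun i => w i ⬝ᵥ d < 0)
    (fun i => (w i ⬝ᵥ y - γ i) / (-(w i ⬝ᵥ d))) ⟨i₀, by simpa using hi₀⟩
  have hj' : w j ⬝ᵥ d < 0 := by simpa using hj
  have ht : 0 ≤ (w j ⬝ᵥ y - γ j) / (-(w j ⬝ᵥ d)) :=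
    div_nonneg (by linarith [hy j]) (by linarith)
  refine ⟨(w j ⬝ᵥ y - γ j) / (-(w j ⬝ᵥ d)), ht, fun i => ?_, j, hj', ?_⟩
  · rw [dotProduct_add, dotProduct_smul, smul_eq_mul]
    by_cases hi : w i ⬝ᵥ d < 0
    · have h1 := hmin i (by simpa using hi)
      rw [le_div_iff₀ (by linarith)] at h1
      linarith
    · have := mul_nonneg ht (not_lt.mp hi)
      linarith [hy i]
  · rw [dotProduct_add, dotProduct_smul, smul_eq_mul]
    have : w j ⬝ᵥ d ≠ 0 := hj'.ne
    field_simp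
    ring

/-- The induction behind `polyhedron_subset_hull_add_cone`, on the number `k` of constraints not
required to be tight; the face considered is the one where the constraints in `I` are tight. -/
lemma face_subset_hull_add_cone {q m : ℕ} {C : Set (Fin q → ℝ)} (hcl : IsClosed C)
    (hconv : Convex ℝ C) (hcone : ∀ c ∈ C, ∀ r : ℝ, 0 ≤ r → r • c ∈ C)
    (hadd : ∀ a ∈ C, ∀ b ∈ C, a + b ∈ C)
    (hpt : C ∩ (-C) = {0}) (w : Fin m → Fin q → ℝ) (γ : Fin m → ℝ) (v : Fin q → ℝ)
    (hv : ∀ y, (∀ i, γ i ≤ w i ⬝ᵥ y) → y - v ∈ C) (k : ℕ) :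
    ∀ I : Finset (Fin m), m - I.card = k →
      ∃ V : Finset (Fin q → ℝ), (∀ y ∈ V, ∀ i, γ i ≤ w i ⬝ᵥ y) ∧
        ∀ y, (∀ i, γ i ≤ w i ⬝ᵥ y) → (∀ i ∈ I, w i ⬝ᵥ y = γ i) →
          y ∈ convexHull ℝ (V : Set (Fin q → ℝ)) + C := by
  classical
  have h0 : (0 : Fin q → ℝ) ∈ C := by
    have : (0 : Fin q → ℝ) ∈ C ∩ (-C) := by rw [hpt]; rfl
    exact this.1
  induction k using Nat.strong_induction_on with
  | _ k ih =>
  intro I hI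
  by_cases hsub : ∀ y z, (∀ i, γ i ≤ w i ⬝ᵥ y) → (∀ i ∈ I, w i ⬝ᵥ y = γ i) →
      (∀ i, γ i ≤ w i ⬝ᵥ z) → (∀ i ∈ I, w i ⬝ᵥ z = γ i) → y = z
  · by_cases hne : ∃ y, (∀ i, γ i ≤ w i ⬝ᵥ y) ∧ (∀ i ∈ I, w i ⬝ᵥ y = γ i)
    · obtain ⟨y, hy, hyI⟩ := hne
      refine ⟨{y}, by simpa using hy, fun z hz hzI => ?_⟩
      rw [hsub z y hz hzI hy hyI]
      exact ⟨y, subset_convexHull ℝ _ (by simp), 0, h0, add_zero y⟩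
    · exact ⟨∅, by simp, fun y hy hyI => absurd ⟨y, hy, hyI⟩ hne⟩
  · push Not at hsub
    obtain ⟨a, b, ha, haI, hb, hbI, hab⟩ := hsub
    have hstep : ∀ j, ∃ V : Finset (Fin q → ℝ), (∀ y ∈ V, ∀ i, γ i ≤ w i ⬝ᵥ y) ∧
        (j ∉ I → ∀ y, (∀ i, γ i ≤ w i ⬝ᵥ y) → (∀ i ∈ insert j I, w i ⬝ᵥ y = γ i) →
          y ∈ convexHull ℝ (V : Set (Fin q → ℝ)) + C) := by
      intro j
      by_cases hj : j ∈ I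
      · exact ⟨∅, by simp, fun h => absurd hj h⟩
      · have hc : (insert j I).card = I.card + 1 := Finset.card_insert_of_notMem hj
        have hle : (insert j I).card ≤ m := by
          simpa using Finset.card_le_univ (insert j I)
        obtain ⟨V, h1, h2⟩ := ih (m - (insert j I).card) (by omega) (insert j I) rfl
        exact ⟨V, h1, fun _ => h2⟩
    choose V hVQ hV using hstep
    refine ⟨Finset.univ.biUnion V, ?_, ?_⟩
    · intro y hy
      obtain ⟨j, -, hj⟩ := Finset.mem_biUnion.mp hy
      exact hVQ j y hj
    set K : Set (Fin q → ℝ) :=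
      convexHull ℝ ((Finset.univ.biUnion V : Finset (Fin q → ℝ)) : Set (Fin q → ℝ)) + C with hK
    have hKconv : Convex ℝ K := (convex_convexHull ℝ _).add hconv
    -- Along a direction of the face outside `C`, every point moves into a smaller face.
    have hmove : ∀ d : Fin q → ℝ, (∀ i ∈ I, w i ⬝ᵥ d = 0) → d ∉ C →
        ∀ y, (∀ i, γ i ≤ w i ⬝ᵥ y) → (∀ i ∈ I, w i ⬝ᵥ y = γ i) →
          ∃ t : ℝ, 0 ≤ t ∧ y + t • d ∈ K := by
      intro d hdI hd y hy hyI
      have hex : ∃ i, w i ⬝ᵥ d < 0 := by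
        by_contra hno
        push Not at hno
        refine hd (direction_mem_of_ray hcl hcone (y - v) d fun t ht => ?_)
        have := hv (y + t • d) fun i => by
          rw [dotProduct_add, dotProduct_smul, smul_eq_mul]
          linarith [hy i, mul_nonneg ht (hno i)]
        rwa [add_sub_right_comm] at this
      obtain ⟨t, ht, htQ, j, hj, hjt⟩ := exists_exit w γ y d hy hex
      refine ⟨t, ht, ?_⟩
      have hjI : j ∉ I := fun h => hj.ne (hdI j h)
      have := hV j hjI (y + t • d) htQ fun i hi => by
        rcases Finset.mem_insert.mp hi with rfl | hi
        · exact hjt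
        · rw [dotProduct_add, dotProduct_smul, hdI i hi, hyI i hi]; simp
      refine Set.add_subset_add_right (convexHull_mono ?_) this
      exact_mod_cast Finset.subset_biUnion_of_mem V (Finset.mem_univ j)
    have hKadd : ∀ y ∈ K, ∀ c ∈ C, y + c ∈ K := by
      rintro _ ⟨p, hp, c', hc', rfl⟩ c hc
      exact ⟨p, hp, c' + c, hadd _ hc' _ hc, (add_assoc p c' c).symm⟩
    -- If `d ∈ C`, moving along `-d` and coming back along `d` stays in `K`.
    have hone : ∀ d : Fin q → ℝ, (∀ i ∈ I, w i ⬝ᵥ d = 0) → d ∈ C → -d ∉ C →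
        ∀ y, (∀ i, γ i ≤ w i ⬝ᵥ y) → (∀ i ∈ I, w i ⬝ᵥ y = γ i) → y ∈ K := by
      intro d hdI hd hd' y hy hyI
      obtain ⟨t, ht, htK⟩ := hmove (-d) (fun i hi => by simp [hdI i hi]) hd' y hy hyI
      have := hKadd _ htK _ (hcone d hd t ht)
      simpa using this
    intro y hy hyI
    have hdI : ∀ i ∈ I, w i ⬝ᵥ (a - b) = 0 := fun i hi => by
      rw [dotProduct_sub, haI i hi, hbI i hi, sub_self]
    have hdI' : ∀ i ∈ I, w i ⬝ᵥ (-(a - b)) = 0 := fun i hi => by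
      rw [dotProduct_neg, hdI i hi, neg_zero]
    by_cases h1 : a - b ∈ C
    · have h2 : -(a - b) ∉ C := fun h2 => hab (sub_eq_zero.mp (by
        have : a - b ∈ C ∩ (-C) := ⟨h1, h2⟩
        rwa [hpt] at this))
      exact hone _ hdI h1 h2 y hy hyI
    · by_cases h2 : -(a - b) ∈ C
      · exact hone _ hdI' h2 (by rwa [neg_neg]) y hy hyI
      · obtain ⟨t, ht, htK⟩ := hmove _ hdI h1 y hy hyI
        obtain ⟨s, hs, hsK⟩ := hmove _ hdI' h2 y hy hyI
        rcases (add_nonneg ht hs).eq_or_lt with h | h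
        · have : t = 0 := by linarith
          simpa [this] using htK
        · have hc := hKconv htK hsK (div_nonneg hs h.le) (div_nonneg ht h.le)
            (by field_simp; ring)
          convert hc using 1
          ext i
          simp only [Pi.add_apply, Pi.smul_apply, Pi.neg_apply, Pi.sub_apply, smul_eq_mul]
          field_simp
          ring

/-- A polyhedron contained in a translate of a pointed closed convex cone `C` has finitely many
points whose convex hull, enlarged by `C`, contains it. -/
lemma polyhedron_subset_hull_add_cone {q m : ℕ} {C : Set (Fin q → ℝ)} (hcl : IsClosed C)
    (hconv : Convex ℝ C) (hcone : ∀ c ∈ C, ∀ r : ℝ, 0 ≤ r → r • c ∈ C)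
    (hadd : ∀ a ∈ C, ∀ b ∈ C, a + b ∈ C)
    (hpt : C ∩ (-C) = {0}) (w : Fin m → Fin q → ℝ) (γ : Fin m → ℝ) (v : Fin q → ℝ)
    (hv : ∀ y, (∀ i, γ i ≤ w i ⬝ᵥ y) → y - v ∈ C) :
    ∃ V : Finset (Fin q → ℝ), (∀ y ∈ V, ∀ i, γ i ≤ w i ⬝ᵥ y) ∧
      ∀ y, (∀ i, γ i ≤ w i ⬝ᵥ y) → y ∈ convexHull ℝ (V : Set (Fin q → ℝ)) + C := by
  obtain ⟨V, h1, h2⟩ := face_subset_hull_add_cone hcl hconv hcone hadd hpt w γ v hv _ ∅ rfl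
  exact ⟨V, h1, fun y hy => h2 y hy (by simp)⟩

/-- A point of a generating set `V` that is strictly dominated by a point of `conv V + C` is
redundant: it lies in the set generated by the remaining points. -/
lemma mem_hull_erase_add_cone {q : ℕ} [DecidableEq (Fin q → ℝ)] {C : Set (Fin q → ℝ)}
    (hcone : ∀ c ∈ C, ∀ r : ℝ, 0 ≤ r → r • c ∈ C)
    (hadd : ∀ a ∈ C, ∀ b ∈ C, a + b ∈ C)
    (hpt : C ∩ (-C) = {0}) (V : Finset (Fin q → ℝ)) (y z : Fin q → ℝ) (hy : y ∈ V)
    (hz : z ∈ convexHull ℝ (V : Set (Fin q → ℝ)) + C) (hyz : y - z ∈ C \ {0}) :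
    y ∈ convexHull ℝ ((V.erase y : Finset (Fin q → ℝ)) : Set (Fin q → ℝ)) + C := by
  obtain ⟨p, hp, c, hc, rfl⟩ := hz
  obtain ⟨hd, hd0⟩ := hyz
  set d := y - (p + c) with hdef
  have hpy : p ≠ y := by
    rintro rfl
    -- Here `d = -c`, so pointedness of `C` forces `d = 0`.
    have hdc : d = -c := by rw [hdef]; abel
    have : d ∈ C ∩ (-C) := ⟨hd, by rw [hdc]; simpa using hc⟩
    rw [hpt] at this
    exact hd0 this
  rw [← Finset.insert_erase hy, Finset.coe_insert] at hp
  rcases (V.erase y).eq_empty_or_nonempty with he | hne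
  · rw [he] at hp
    simp at hp
    exact absurd hp hpy
  · rw [convexHull_insert (by exact_mod_cast hne)] at hp
    obtain ⟨y', hy', p', hp', hseg⟩ := mem_convexJoin.mp hp
    rw [mem_singleton_iff] at hy'
    subst hy'
    obtain ⟨a, b, ha, hb, hab, rfl⟩ := hseg
    have hb0 : b ≠ 0 := by
      rintro rfl
      apply hpy
      have : a = 1 := by linarith
      simp [this]
    refine ⟨p', hp', b⁻¹ • (c + d), hcone _ (hadd _ hc _ hd) _ (inv_nonneg.mpr hb), ?_⟩
    have ha' : a = 1 - b := by linarith
    ext i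
    simp only [hdef, ha', Pi.add_apply, Pi.smul_apply, Pi.sub_apply, smul_eq_mul]
    field_simp
    ring

/-- Every finite infimizer for (P) contains a pre-solution to (P): there are points
`x¹,…,x^r` in the infimizer and `yⁱ ∈ F(xⁱ)` such that `{(x¹,y¹),…,(x^r,y^r)}` is a
solution of the vectorial relaxation (VR), i.e. each `yⁱ` is `C`-minimal in
`Y = ⋃ₓ F(x)` and `cl conv({y¹,…,y^r} + C) = cl conv(Y + C)`. -/
theorem infimizer_contains_presolution
    (n q : ℕ) (hn : 0 < n) (hq : 0 < q)
    -- C is a pointed polyhedral convex cone with nonempty interior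
    (C : Set (Fin q → ℝ))
    (hCpoly : IsPolyhedral C)
    (hCcone : ∀ c ∈ C, ∀ r : ℝ, 0 ≤ r → r • c ∈ C)
    (hCpointed : C ∩ (-C) = {0})
    (hCint : (interior C).Nonempty)
    -- F has polyhedral convex graph
    (F : (Fin n → ℝ) → Set (Fin q → ℝ))
    (hgrF : PolyhedralGraph n q F)
    -- (P) is feasible and bounded
    (hfeas : ∃ x, (F x).Nonempty)
    (hbdd : ∃ v : Fin q → ℝ, ∀ x, F x ⊆ {v} + C)
    -- X̄ is a finite infimizer for (P)
    (Xbar : Finset (Fin n → ℝ))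
    (hXdom : ∀ x ∈ Xbar, (F x).Nonempty)
    (hXinf : closure (convexHull ℝ (⋃ x ∈ Xbar, (F x + C))) =
      closure (convexHull ℝ (⋃ x : Fin n → ℝ, (F x + C)))) :
    ∃ (r : ℕ) (x : Fin r → (Fin n → ℝ)) (y : Fin r → (Fin q → ℝ)),
      0 < r ∧
      (∀ i, x i ∈ Xbar) ∧
      (∀ i, y i ∈ F (x i)) ∧
      -- each yⁱ is C-minimal in Y
      (∀ i, ¬ ∃ z ∈ {v : Fin q → ℝ | ∃ u, v ∈ F u}, y i - z ∈ C \ {0}) ∧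
      -- the infimum of (VR) is attained in {y¹,…,y^r}
      closure (convexHull ℝ (Set.range y + C)) =
        closure (convexHull ℝ ({v : Fin q → ℝ | ∃ u, v ∈ F u} + C)) := by
  classical
  have h0 : (0 : Fin q → ℝ) ∈ C := by
    have : (0 : Fin q → ℝ) ∈ C ∩ (-C) := by rw [hCpointed]; rfl
    exact this.1
  have hCcl : IsClosed C := by
    obtain ⟨m, w, γ, rfl⟩ := hCpoly
    simp only [ofPred_forall]
    exact isClosed_iInter fun i =>
      isClosed_le continuous_const (continuous_const.dotProduct continuous_id)
  have hCconv : Convex ℝ C := by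
    obtain ⟨m, w, γ, rfl⟩ := hCpoly
    intro x hx y hy a b ha hb hab i
    rw [dotProduct_add, dotProduct_smul, dotProduct_smul, smul_eq_mul, smul_eq_mul]
    have hγ : γ i = a * γ i + b * γ i := by rw [← add_mul, hab, one_mul]
    rw [hγ]
    exact add_le_add (mul_le_mul_of_nonneg_left (hx i) ha) (mul_le_mul_of_nonneg_left (hy i) hb)
  have hCadd : ∀ a ∈ C, ∀ b ∈ C, a + b ∈ C := by
    intro a ha b hb
    have h := hCconv (hCcone a ha 2 (by norm_num)) (hCcone b hb 2 (by norm_num))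
      (a := 1 / 2) (b := 1 / 2) (by norm_num) (by norm_num) (by norm_num)
    simpa [smul_smul] using h
  have hKconv : ∀ V : Finset (Fin q → ℝ),
      Convex ℝ (convexHull ℝ (V : Set (Fin q → ℝ)) + C) := fun V =>
    (convex_convexHull ℝ _).add hCconv
  have hKcl : ∀ V : Finset (Fin q → ℝ),
      IsClosed (convexHull ℝ (V : Set (Fin q → ℝ)) + C) := fun V =>
    hCcl.add_left_of_isCompact (V.finite_toSet.isCompact_convexHull ℝ)
  have hKadd : ∀ V : Finset (Fin q → ℝ), ∀ y ∈ convexHull ℝ (V : Set (Fin q → ℝ)) + C,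
      ∀ c ∈ C, y + c ∈ convexHull ℝ (V : Set (Fin q → ℝ)) + C := by
    rintro V _ ⟨p, hp, c', hc', rfl⟩ c hc
    exact ⟨p, hp, c' + c, hCadd _ hc' _ hc, (add_assoc p c' c).symm⟩
  have hfib : ∀ x, ∃ V : Finset (Fin q → ℝ), (∀ y ∈ V, y ∈ F x) ∧
      F x ⊆ convexHull ℝ (V : Set (Fin q → ℝ)) + C := by
    intro x
    obtain ⟨m, A, B, b, hF⟩ := hgrF
    obtain ⟨v, hv⟩ := hbdd
    have hmem : ∀ y, y ∈ F x ↔ ∀ i, b i - (A *ᵥ x) i ≤ B i ⬝ᵥ y := by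
      intro y
      rw [hF, Pi.le_def]
      refine forall_congr' fun i => ?_
      rw [Pi.add_apply, sub_le_iff_le_add']
      rfl
    obtain ⟨V, h1, h2⟩ := polyhedron_subset_hull_add_cone hCcl hCconv hCcone hCadd hCpointed
      (fun i => B i) (fun i => b i - (A *ᵥ x) i) v (fun y hy => by
        obtain ⟨_, rfl, c, hc, rfl⟩ := hv x ((hmem y).mpr hy)
        simpa using hc)
    exact ⟨V, fun y hy => (hmem y).mpr (h1 y hy), fun y hy => h2 y ((hmem y).mp hy)⟩
  choose W hWF hW using hfib
  -- `V` generates the upper image and uses only values of `F` on `Xbar`.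
  let good : Finset (Fin q → ℝ) → Prop := fun V =>
    (∀ y ∈ V, ∃ x ∈ Xbar, y ∈ F x) ∧
      {v : Fin q → ℝ | ∃ u, v ∈ F u} ⊆ convexHull ℝ (V : Set (Fin q → ℝ)) + C
  have hgood : ∃ V, good V := by
    refine ⟨Xbar.biUnion W, ?_, ?_⟩
    · intro y hy
      obtain ⟨x, hx, hyx⟩ := Finset.mem_biUnion.mp hy
      exact ⟨x, hx, hWF x y hyx⟩
    · have hsub : closure (convexHull ℝ (⋃ x ∈ Xbar, (F x + C))) ⊆
          convexHull ℝ ((Xbar.biUnion W : Finset (Fin q → ℝ)) : Set (Fin q → ℝ)) + C := by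
        refine closure_minimal (convexHull_min ?_ (hKconv _)) (hKcl _)
        refine iUnion₂_subset fun x hx => ?_
        rintro _ ⟨y, hy, c, hc, rfl⟩
        refine hKadd _ y (Set.add_subset_add_right (convexHull_mono ?_) (hW x hy)) c hc
        exact_mod_cast Finset.subset_biUnion_of_mem W hx
      rintro y ⟨u, hu⟩
      apply hsub
      rw [hXinf]
      refine subset_closure (subset_convexHull ℝ _ ?_)
      exact mem_iUnion.mpr ⟨u, y, hu, 0, h0, add_zero y⟩
  obtain ⟨V, hVgood, hVmin⟩ : ∃ V, good V ∧ ∀ V', good V' → V.card ≤ V'.card := by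
    have hex : ∃ k, ∃ V, good V ∧ V.card = k := hgood.imp' _ fun V hV => ⟨V, hV, rfl⟩
    obtain ⟨V, hV, hk⟩ := Nat.find_spec hex
    exact ⟨V, hV, fun V' hV' => hk ▸ Nat.find_min' hex ⟨V', hV', rfl⟩⟩
  have hne : V.Nonempty := by
    obtain ⟨x, y, hy⟩ := hfeas
    obtain ⟨p, hp, -⟩ := hVgood.2 ⟨x, hy⟩
    exact_mod_cast convexHull_nonempty_iff.mp ⟨p, hp⟩
  have hmin : ∀ y ∈ V, ¬ ∃ z ∈ {v : Fin q → ℝ | ∃ u, v ∈ F u}, y - z ∈ C \ {0} := by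
    rintro y hy ⟨z, hz, hyz⟩
    have hyK := mem_hull_erase_add_cone hCcone hCadd hCpointed V y z hy (hVgood.2 hz) hyz
    have hVK : convexHull ℝ (V : Set (Fin q → ℝ)) ⊆
        convexHull ℝ ((V.erase y : Finset (Fin q → ℝ)) : Set (Fin q → ℝ)) + C := by
      refine convexHull_min (fun u hu => ?_) (hKconv _)
      by_cases huy : u = y
      · rw [huy]; exact hyK
      · exact ⟨u, subset_convexHull ℝ _ (Finset.mem_coe.mpr (Finset.mem_erase.mpr ⟨huy, hu⟩)),
          0, h0, add_zero u⟩
    have := hVmin (V.erase y) ⟨fun u hu => hVgood.1 u (Finset.mem_of_mem_erase hu),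
      fun u hu => by
        obtain ⟨p, hp, c, hc, rfl⟩ := hVgood.2 hu
        exact hKadd _ p (hVK hp) c hc⟩
    exact absurd (Finset.card_erase_lt_of_mem hy) (not_lt.mpr this)
  have hVx : ∀ i : Fin V.card, ∃ x ∈ Xbar, (V.equivFin.symm i : Fin q → ℝ) ∈ F x := fun i =>
    hVgood.1 _ (V.equivFin.symm i).2
  choose x hxX hxF using hVx
  refine ⟨V.card, x, fun i => V.equivFin.symm i, Finset.card_pos.mpr hne, hxX, hxF,
    fun i => hmin _ (V.equivFin.symm i).2, ?_⟩
  have hrange : Set.range (fun i => (V.equivFin.symm i : Fin q → ℝ)) = (V : Set (Fin q → ℝ)) := by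
    ext u
    constructor
    · rintro ⟨i, rfl⟩
      exact (V.equivFin.symm i).2
    · intro hu
      exact ⟨V.equivFin ⟨u, hu⟩, by simp⟩
  rw [hrange]
  refine Set.Subset.antisymm (closure_mono (convexHull_mono (Set.add_subset_add_right ?_))) ?_
  · intro u hu
    obtain ⟨x, -, hx⟩ := hVgood.1 u hu
    exact ⟨x, hx⟩
  · rw [convexHull_add (s := (V : Set (Fin q → ℝ))), hCconv.convexHull_eq, (hKcl V).closure_eq]
    refine closure_minimal (convexHull_min ?_ (hKconv V)) (hKcl V)
    rintro _ ⟨y, hy, c, hc, rfl⟩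
    exact hKadd V y (hVgood.2 hy) c hc
end

section
/- Let (P) be feasible and bounded, let x̄ ∈ dom F, and suppose an H-representation of F(x̄)+C is given: F(x̄) + C = {y ∈ ℝ^q : (w^j)ᵀ y ≤ γ_j for j = 1,…,r} with w^j ∈ ℝ^q∖{0} and γ_j ∈ ℝ. If α(w^j, x̄) = β(w^j, x̄) for every j ∈ {1,…,r}, then x̄ is a minimizer for (P). -/
/-!
Let `F x + C ⊇ F x̄ + C`; the reverse inclusion is checked against each inequality
`wʲ ⬝ᵥ z ≤ γⱼ` of the H-representation. For `y ∈ F x` one has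
`wʲ ⬝ᵥ y ≤ α(wʲ, x̄) = β(wʲ, x̄) ≤ γⱼ`, the last step because `F x̄ ⊆ F x̄ + C`.
Since `F x̄ + C` recedes in every direction `c ∈ C`, each `wʲ` is nonpositive on `C`, so
adding an element of `C` to `y` preserves the inequality.
-/

open Matrix Set Pointwise

/-- The optimal value `α(w,x̄) = sup {wᵀy : y ∈ F(x), F(x) ⪯ F(x̄)}` (in the
extended reals). -/
noncomputable def alpha {n q : ℕ} (F : (Fin n → ℝ) → Set (Fin q → ℝ))
    (C : Set (Fin q → ℝ)) (w : Fin q → ℝ) (xbar : Fin n → ℝ) : EReal :=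
  sSup {e : EReal | ∃ (x : Fin n → ℝ) (y : Fin q → ℝ),
    y ∈ F x ∧ F xbar + C ⊆ F x + C ∧ e = ((w ⬝ᵥ y : ℝ) : EReal)}

/-- The lower bound `β(w,x̄) = sup {wᵀy : y ∈ F(x̄)}` (in the extended reals). -/
noncomputable def beta {n q : ℕ} (F : (Fin n → ℝ) → Set (Fin q → ℝ))
    (w : Fin q → ℝ) (xbar : Fin n → ℝ) : EReal :=
  sSup {e : EReal | ∃ y ∈ F xbar, e = ((w ⬝ᵥ y : ℝ) : EReal)}

/-- Optimality condition: if `α(wʲ,x̄) = β(wʲ,x̄)` for all outer normals `wʲ` of an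
H-representation of `F(x̄) + C`, then `x̄` is a minimizer for (P). -/
theorem optimality_condition
    (n q : ℕ) (hn : 0 < n) (hq : 0 < q)
    -- C is a pointed polyhedral convex cone with nonempty interior
    (C : Set (Fin q → ℝ))
    (hCpoly : IsPolyhedral C)
    (hCcone : ∀ c ∈ C, ∀ r : ℝ, 0 ≤ r → r • c ∈ C)
    (hCpointed : C ∩ (-C) = {0})
    (hCint : (interior C).Nonempty)
    -- F has polyhedral convex graph
    (F : (Fin n → ℝ) → Set (Fin q → ℝ))
    (hgrF : PolyhedralGraph n q F)
    -- (P) is feasible and bounded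
    (hfeas : ∃ x, (F x).Nonempty)
    (hbdd : ∃ v : Fin q → ℝ, ∀ x, F x ⊆ {v} + C)
    -- x̄ ∈ dom F
    (xbar : Fin n → ℝ) (hxbar : (F xbar).Nonempty)
    -- H-representation of F(x̄) + C
    (r : ℕ) (w : Fin r → (Fin q → ℝ)) (γ : Fin r → ℝ)
    (hw : ∀ j, w j ≠ 0)
    (hH : F xbar + C = {y : Fin q → ℝ | ∀ j, w j ⬝ᵥ y ≤ γ j})
    -- α(wʲ,x̄) = β(wʲ,x̄) for all j
    (heq : ∀ j, alpha F C (w j) xbar = beta F (w j) xbar) :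
    Minimizer F C xbar := by
  have h0 : (0 : Fin q → ℝ) ∈ C := by
    have h : (0 : Fin q → ℝ) ∈ C ∩ (-C) := by rw [hCpointed]; rfl
    exact h.1
  have hle : ∀ y ∈ F xbar, ∀ c ∈ C, ∀ j, w j ⬝ᵥ (y + c) ≤ γ j := by
    intro y hy c hc
    have h : y + c ∈ F xbar + C := Set.add_mem_add hy hc
    rw [hH] at h
    exact h
  have hle0 : ∀ y ∈ F xbar, ∀ j, w j ⬝ᵥ y ≤ γ j := by
    intro y hy j
    simpa using hle y hy 0 h0 j
  have hpolar : ∀ c ∈ C, ∀ j, w j ⬝ᵥ c ≤ 0 := by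
    intro c hc j
    obtain ⟨y, hy⟩ := hxbar
    by_contra! hpos
    have hy0 := hle0 y hy j
    -- The step length is chosen so that `w j ⬝ᵥ (y + t • c) = γ j + 1`.
    have h := hle y hy _
      (hCcone c hc ((γ j - w j ⬝ᵥ y + 1) / (w j ⬝ᵥ c)) (div_nonneg (by linarith) hpos.le)) j
    rw [dotProduct_add, dotProduct_smul, smul_eq_mul, div_mul_cancel₀ _ hpos.ne'] at h
    linarith
  refine ⟨hxbar, ?_⟩
  rintro ⟨x, hsub, hne⟩
  refine hne (Set.Subset.antisymm ?_ hsub)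
  rintro _ ⟨y, hy, c, hc, rfl⟩
  rw [hH]
  intro j
  have hα : ((w j ⬝ᵥ y : ℝ) : EReal) ≤ alpha F C (w j) xbar :=
    le_sSup ⟨x, y, hy, hsub, rfl⟩
  have hβ : beta F (w j) xbar ≤ ((γ j : ℝ) : EReal) := by
    refine sSup_le ?_
    rintro _ ⟨z, hz, rfl⟩
    exact EReal.coe_le_coe_iff.2 (hle0 z hz j)
  have hyγ : w j ⬝ᵥ y ≤ γ j :=
    EReal.coe_le_coe_iff.1 ((hα.trans_eq (heq j)).trans hβ)
  have hc0 := hpolar c hc j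
  simp only [dotProduct_add]
  linarith
end

section
/- Let (P) be feasible and bounded. Let x̄ ∈ dom F, let w ∈ ℝ^q and γ ∈ ℝ be such that the halfspace H = {y ∈ ℝ^q : wᵀy ≤ γ} contains F(x̄) + C, and let y¹,…,y^s ∈ ℝ^q satisfy F(x̄) + C = conv{y¹,…,y^s} + C. Then the supremum α(w,x̄) is finite and attained: there exist x̂ ∈ ℝⁿ and ŷ ∈ F(x̂) with F(x̂) + C ⊇ F(x̄) + C and wᵀŷ = α(w,x̄). -/
/-!
By the V-representation, `F x̄ + C ⊆ F x + C` holds iff every `y k` lies in `F x + C`, because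
`F x + C` is convex and absorbs `C`. So `α(w, x̄)` is the value of a linear program in the variables
`(x, y, u)` with constraints `y ∈ F x`, `u k ∈ F x` and `y k - u k ∈ C`. It is feasible at `x̄`.
The halfspace containing `F x̄ + C` forces `w ⬝ᵥ c ≤ 0` on `C`, hence `w ⬝ᵥ y ≤ w ⬝ᵥ v` whenever
`y ∈ F x ⊆ {v} + C`, so the program is bounded above.

It remains to see that a feasible bounded linear program attains its supremum
(`IsPolyhedron.exists_isMaxOn`). For a polyhedron `S` and a functional `f ≠ 0`,
Fourier-Motzkin elimination along a spanning set of `ker f` shows that `S + ker f = f ⁻¹' (f '' S)` is again a polyhedron, hence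
closed; slicing it along a line transversal to `ker f` shows that `f '' S ⊆ ℝ` is closed, so it
contains its supremum.
-/

open Matrix Set Pointwise

/-! ### Polyhedra in real vector spaces -/

/-- A polyhedron in a real vector space: the solution set of finitely many linear inequalities
`b i ≤ g i z`. This is the coordinate-free counterpart of `IsPolyhedral`. -/
def IsPolyhedron {E : Type} [AddCommGroup E] [Module ℝ E] (S : Set E) : Prop :=
  ∃ (ι : Type) (_ : Finite ι) (g : ι → E →ₗ[ℝ] ℝ) (b : ι → ℝ), S = {z | ∀ i, b i ≤ g i z}

namespace IsPolyhedron

variable {E E' : Type} [AddCommGroup E] [Module ℝ E] [AddCommGroup E'] [Module ℝ E']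

theorem preimage {S : Set E} (hS : IsPolyhedron S) (c : E) (L : E' →ₗ[ℝ] E) :
    IsPolyhedron {z | c + L z ∈ S} := by
  obtain ⟨ι, hι, g, b, rfl⟩ := hS
  refine ⟨ι, hι, fun i => (g i).comp L, fun i => b i - g i c, ?_⟩
  ext z
  simp [add_comm]

theorem preimage_linear {S : Set E} (hS : IsPolyhedron S) (L : E' →ₗ[ℝ] E) :
    IsPolyhedron {z | L z ∈ S} := by
  simpa using hS.preimage 0 L

theorem inter {S T : Set E} (hS : IsPolyhedron S) (hT : IsPolyhedron T) : IsPolyhedron (S ∩ T) := by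
  obtain ⟨ι, hι, g, b, rfl⟩ := hS
  obtain ⟨κ, hκ, h, d, rfl⟩ := hT
  refine ⟨ι ⊕ κ, inferInstance, Sum.elim g h, Sum.elim b d, ?_⟩
  ext z
  simp

theorem iInter {κ : Type} [Finite κ] {S : κ → Set E} (hS : ∀ k, IsPolyhedron (S k)) :
    IsPolyhedron {z | ∀ k, z ∈ S k} := by
  choose ι hι g b h using hS
  refine ⟨Σ k, ι k, inferInstance, fun p => g p.1 p.2, fun p => b p.1 p.2, ?_⟩
  ext z
  simp [h, Sigma.forall]

theorem convex {S : Set E} (hS : IsPolyhedron S) : Convex ℝ S := by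
  obtain ⟨ι, hι, g, b, rfl⟩ := hS
  intro x hx y hy s t hs ht hst i
  have h1 := mul_le_mul_of_nonneg_left (hx i) hs
  have h2 := mul_le_mul_of_nonneg_left (hy i) ht
  have h3 : b i = s * b i + t * b i := by rw [← add_mul, hst, one_mul]
  simp only [map_add, map_smul, smul_eq_mul]
  linarith

/-- One-variable Fourier-Motzkin elimination: finitely many inequalities `c i ≤ a i * t` have a
common solution `t` as soon as those with `a i = 0` hold and each pair of a lower and an upper
bound on `t` is consistent. -/
theorem exists_forall_le_mul {ι : Type} [Finite ι] (a c : ι → ℝ) (h0 : ∀ i, a i = 0 → c i ≤ 0)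
    (h : ∀ i j, 0 < a i → a j < 0 → -a j * c i + a i * c j ≤ 0) : ∃ t : ℝ, ∀ i, c i ≤ a i * t := by
  have key : ∃ t : ℝ, (∀ i, 0 < a i → c i / a i ≤ t) ∧ ∀ j, a j < 0 → t ≤ c j / a j := by
    let lower : Set ℝ := (fun i => c i / a i) '' {i | 0 < a i}
    let upper : Set ℝ := (fun j => c j / a j) '' {j | a j < 0}
    rcases lower.eq_empty_or_nonempty with hl | hl
    · obtain ⟨t, ht⟩ := (Set.toFinite upper).bddBelow
      refine ⟨t, fun i hi => ?_, fun j hj => ht ⟨j, hj, rfl⟩⟩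
      exact absurd (mem_image_of_mem (fun i => c i / a i) hi) (hl ▸ notMem_empty _)
    · refine ⟨sSup lower, fun i hi => le_csSup (Set.toFinite lower).bddAbove ⟨i, hi, rfl⟩,
        fun j hj => csSup_le hl ?_⟩
      rintro _ ⟨i, hi, rfl⟩
      have hi' : 0 < a i := hi
      rw [le_div_iff_of_neg hj, div_mul_eq_mul_div, le_div_iff₀ hi']
      linarith [h i j hi' hj]
  obtain ⟨t, hl, hu⟩ := key
  refine ⟨t, fun i => ?_⟩
  rcases lt_trichotomy (a i) 0 with hi | hi | hi
  · have := (le_div_iff_of_neg hi).1 (hu i hi)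
    linarith
  · simpa [hi] using h0 i hi
  · have := (div_le_iff₀ hi).1 (hl i hi)
    linarith

/-- Fourier-Motzkin elimination along the direction `e`: the set `S + ℝ e` is a polyhedron. -/
theorem add_line {S : Set E} (hS : IsPolyhedron S) (e : E) :
    IsPolyhedron {z | ∃ t : ℝ, z + t • e ∈ S} := by
  obtain ⟨ι, hι, g, b, rfl⟩ := hS
  refine ⟨{i // g i e = 0} ⊕ ({i // 0 < g i e} × {j // g j e < 0}), inferInstance,
    Sum.elim (fun i => g i) (fun p => (-g p.2 e) • g p.1 + (g p.1 e) • g p.2),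
    Sum.elim (fun i => b i) (fun p => (-g p.2 e) * b p.1 + (g p.1 e) * b p.2), ?_⟩
  ext z
  simp only [mem_ofPred_eq, map_add, map_smul, smul_eq_mul, Sum.forall, Sum.elim_inl, Sum.elim_inr,
    Subtype.forall, Prod.forall, LinearMap.add_apply, LinearMap.smul_apply]
  constructor
  · rintro ⟨t, ht⟩
    refine ⟨fun i hi => by simpa [hi] using ht i, fun i hi j hj => ?_⟩
    have h1 := mul_le_mul_of_nonneg_left (ht i) (neg_nonneg.2 hj.le)
    have h2 := mul_le_mul_of_nonneg_left (ht j) hi.le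
    linarith
  · rintro ⟨h0, h⟩
    obtain ⟨t, ht⟩ := exists_forall_le_mul (fun i => g i e) (fun i => b i - g i z)
      (fun i hi => by linarith [h0 i hi])
      (fun i j hi hj => by linarith [h i hi j hj])
    exact ⟨t, fun i => by linarith [ht i]⟩

theorem add_submodule {V : Submodule ℝ E} (hV : V.FG) :
    ∀ {S : Set E}, IsPolyhedron S → IsPolyhedron {z | ∃ v ∈ V, z + v ∈ S} := by
  refine Submodule.fg_induction
    (motive := fun V _ => ∀ {S : Set E}, IsPolyhedron S → IsPolyhedron {z | ∃ v ∈ V, z + v ∈ S})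
    ?_ ?_ V hV
  · intro e S hS
    simpa [Submodule.mem_span_singleton] using hS.add_line e
  · intro V W _ _ hV hW S hS
    convert hV (hW hS) using 1
    ext z
    simp only [mem_ofPred_eq, Submodule.mem_sup]
    constructor
    · rintro ⟨_, ⟨v, hv, w, hw, rfl⟩, h⟩
      exact ⟨v, hv, w, hw, by rwa [add_assoc]⟩
    · rintro ⟨v, hv, w, hw, h⟩
      exact ⟨_, ⟨v, hv, w, hw, rfl⟩, by rwa [← add_assoc]⟩

theorem isClosed_real {T : Set ℝ} (hT : IsPolyhedron T) : IsClosed T := by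
  obtain ⟨ι, hι, g, b, rfl⟩ := hT
  simp only [ofPred_forall]
  exact isClosed_iInter fun i =>
    isClosed_le continuous_const (g i).continuous_of_finiteDimensional

theorem isClosed_image [FiniteDimensional ℝ E] {S : Set E} (hS : IsPolyhedron S) (f : E →ₗ[ℝ] ℝ)
    (hf : f ≠ 0) : IsClosed (f '' S) := by
  obtain ⟨e, he⟩ := LinearMap.surjective hf 1
  -- `t • e` lies in `S + ker f` exactly when `t = f (t • e)` is a value of `f` on `S`.
  have h := ((add_submodule (IsNoetherian.noetherian (LinearMap.ker f)) hS).preimage_linear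
    (LinearMap.toSpanSingleton ℝ E e)).isClosed_real
  convert h using 1
  ext t
  simp only [mem_image, mem_ofPred_eq, LinearMap.toSpanSingleton_apply, LinearMap.mem_ker]
  constructor
  · rintro ⟨z, hz, rfl⟩
    exact ⟨z - f z • e, by simp [he], by simpa using hz⟩
  · rintro ⟨v, hv, h⟩
    exact ⟨_, h, by simp [he, hv]⟩

/-- A feasible linear program with objective bounded above has an optimal solution. -/
theorem exists_isMaxOn [FiniteDimensional ℝ E] {S : Set E} (hS : IsPolyhedron S) (hne : S.Nonempty)
    (f : E →ₗ[ℝ] ℝ) (hb : BddAbove (f '' S)) : ∃ z ∈ S, ∀ z' ∈ S, f z' ≤ f z := by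
  by_cases hf : f = 0
  · obtain ⟨z, hz⟩ := hne
    exact ⟨z, hz, fun z' _ => by simp [hf]⟩
  · obtain ⟨z, hz, h⟩ := (hS.isClosed_image f hf).csSup_mem (hne.image f) hb
    exact ⟨z, hz, fun z' hz' => h ▸ le_csSup hb (mem_image_of_mem f hz')⟩

end IsPolyhedron

theorem IsPolyhedral.isPolyhedron {q : ℕ} {P : Set (Fin q → ℝ)} (hP : IsPolyhedral P) :
    IsPolyhedron P := by
  obtain ⟨m, w, γ, rfl⟩ := hP
  exact ⟨Fin m, inferInstance, fun i => dotProductBilin ℝ ℝ (w i), γ, rfl⟩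

theorem PolyhedralGraph.isPolyhedron {n q : ℕ} {F : (Fin n → ℝ) → Set (Fin q → ℝ)}
    (hF : PolyhedralGraph n q F) : IsPolyhedron {p : (Fin n → ℝ) × (Fin q → ℝ) | p.2 ∈ F p.1} := by
  obtain ⟨m, A, B, b, h⟩ := hF
  refine ⟨Fin m, inferInstance, fun i => (LinearMap.proj i).comp
    (A.mulVecLin.comp (LinearMap.fst ℝ _ _) + B.mulVecLin.comp (LinearMap.snd ℝ _ _)), b, ?_⟩
  ext p
  simp [h, Pi.le_def]

/-! ### The linear program -/

/-- If (P) is feasible and bounded, `F(x̄)+C` is contained in a halfspace and has a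
V-representation `conv{y¹,…,y^s} + C`, then the supremum `α(w,x̄)` is finite and
attained: the linear program (P(w; y¹,…,y^s)) has an optimal solution. -/
theorem alpha_attained
    (n q : ℕ) (hn : 0 < n) (hq : 0 < q)
    -- C is a pointed polyhedral convex cone with nonempty interior
    (C : Set (Fin q → ℝ))
    (hCpoly : IsPolyhedral C)
    (hCcone : ∀ c ∈ C, ∀ r : ℝ, 0 ≤ r → r • c ∈ C)
    (hCpointed : C ∩ (-C) = {0})
    (hCint : (interior C).Nonempty)
    -- F has polyhedral convex graph
    (F : (Fin n → ℝ) → Set (Fin q → ℝ))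
    (hgrF : PolyhedralGraph n q F)
    -- (P) is feasible and bounded
    (hfeas : ∃ x, (F x).Nonempty)
    (hbdd : ∃ v : Fin q → ℝ, ∀ x, F x ⊆ {v} + C)
    -- x̄ ∈ dom F
    (xbar : Fin n → ℝ) (hxbar : (F xbar).Nonempty)
    -- a halfspace H = {y : wᵀy ≤ γ} contains F(x̄) + C
    (w : Fin q → ℝ) (γ : ℝ)
    (hhalf : F xbar + C ⊆ {y : Fin q → ℝ | w ⬝ᵥ y ≤ γ})
    -- V-representation of F(x̄) + C
    (s : ℕ) (hs : 0 < s) (y : Fin s → (Fin q → ℝ))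
    (hV : F xbar + C = convexHull ℝ (Set.range y) + C) :
    ∃ (xhat : Fin n → ℝ) (yhat : Fin q → ℝ),
      yhat ∈ F xhat ∧ F xbar + C ⊆ F xhat + C ∧
      ((w ⬝ᵥ yhat : ℝ) : EReal) = alpha F C w xbar := by
  have hCP := hCpoly.isPolyhedron
  have hG := hgrF.isPolyhedron
  have hC0 : (0 : Fin q → ℝ) ∈ C := by
    have : (0 : Fin q → ℝ) ∈ C ∩ (-C) := by rw [hCpointed]; rfl
    exact this.1
  have hCadd : ∀ c ∈ C, ∀ d ∈ C, c + d ∈ C := by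
    intro c hc d hd
    have h := hCcone _ (hCP.convex hc hd (a := 1 / 2) (b := 1 / 2) (by norm_num) (by norm_num)
      (by norm_num)) 2 (by norm_num)
    have e : (2 : ℝ) • ((1 / 2 : ℝ) • c + (1 / 2 : ℝ) • d) = c + d := by
      simp [smul_smul]
    rwa [e] at h
  have hwC : ∀ c ∈ C, w ⬝ᵥ c ≤ 0 := by
    intro c hc
    by_contra! hpos
    obtain ⟨y0, hy0⟩ := hxbar
    -- Moving far enough along the ray `y0 + ℝ₊ c` would leave the halfspace.
    obtain ⟨k, hk⟩ := exists_nat_gt ((γ - w ⬝ᵥ y0) / (w ⬝ᵥ c))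
    have h : w ⬝ᵥ (y0 + (k : ℝ) • c) ≤ γ :=
      hhalf (add_mem_add hy0 (hCcone c hc k (Nat.cast_nonneg k)))
    rw [dotProduct_add, dotProduct_smul, smul_eq_mul] at h
    rw [div_lt_iff₀ hpos] at hk
    linarith
  have hFconv : ∀ x, Convex ℝ (F x) := by
    intro x
    have h := (hG.preimage (x, 0) (LinearMap.inr ℝ (Fin n → ℝ) (Fin q → ℝ))).convex
    simpa using h
  have hincl : ∀ x, F xbar + C ⊆ F x + C ↔ ∀ k, y k ∈ F x + C := by
    intro x
    constructor
    · intro h k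
      apply h
      rw [hV]
      exact ⟨y k, subset_convexHull ℝ _ (mem_range_self k), 0, hC0, add_zero _⟩
    · intro h
      have h1 : convexHull ℝ (range y) ⊆ F x + C :=
        convexHull_min (range_subset_iff.2 h) ((hFconv x).add hCP.convex)
      rw [hV]
      rintro _ ⟨p, hp, c, hc, rfl⟩
      obtain ⟨f, hf, d, hd, rfl⟩ := h1 hp
      exact ⟨f, hf, d + c, hCadd d hd c hc, (add_assoc _ _ _).symm⟩
  -- The feasible set of the linear program in the variables `z = (x, y, u)`.
  let S : Set ((Fin n → ℝ) × (Fin q → ℝ) × (Fin s → Fin q → ℝ)) :=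
    {z | z.2.1 ∈ F z.1} ∩ ({z | ∀ k, z.2.2 k ∈ F z.1} ∩ {z | ∀ k, y k + -z.2.2 k ∈ C})
  have hS : IsPolyhedron S := by
    let X := LinearMap.fst ℝ (Fin n → ℝ) ((Fin q → ℝ) × (Fin s → Fin q → ℝ))
    let YU := LinearMap.snd ℝ (Fin n → ℝ) ((Fin q → ℝ) × (Fin s → Fin q → ℝ))
    let Y := (LinearMap.fst ℝ (Fin q → ℝ) (Fin s → Fin q → ℝ)).comp YU
    let U : Fin s → _ := fun k =>
      (LinearMap.proj (R := ℝ) (φ := fun _ : Fin s => Fin q → ℝ) k).comp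
        ((LinearMap.snd ℝ (Fin q → ℝ) (Fin s → Fin q → ℝ)).comp YU)
    refine (hG.preimage_linear (X.prod Y)).inter (IsPolyhedron.inter ?_ ?_)
    · exact IsPolyhedron.iInter fun k => hG.preimage_linear (X.prod (U k))
    · exact IsPolyhedron.iInter fun k => hCP.preimage (y k) (-U k)
  have hmem : ∀ x y', y' ∈ F x → F xbar + C ⊆ F x + C → ∃ u, (x, y', u) ∈ S := by
    intro x y' hy' h
    have h' := (hincl x).1 h
    choose u hu c hc huc using h'
    refine ⟨u, hy', hu, fun k => ?_⟩
    have e : y k + -u k = c k := by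
      rw [← huc k]
      simp
    simpa [e] using hc k
  obtain ⟨y0, hy0⟩ := hxbar
  obtain ⟨u0, hu0⟩ := hmem xbar y0 hy0 subset_rfl
  let f : ((Fin n → ℝ) × (Fin q → ℝ) × (Fin s → Fin q → ℝ)) →ₗ[ℝ] ℝ :=
    (dotProductBilin ℝ ℝ w).comp ((LinearMap.fst ℝ _ _).comp (LinearMap.snd ℝ _ _))
  have hf : ∀ z, f z = w ⬝ᵥ z.2.1 := fun z => rfl
  have hbd : BddAbove (f '' S) := by
    obtain ⟨v, hv⟩ := hbdd
    refine ⟨w ⬝ᵥ v, ?_⟩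
    rintro _ ⟨z, hz, rfl⟩
    obtain ⟨_, rfl, c, hc, h⟩ := hv _ hz.1
    rw [hf, ← h, dotProduct_add]
    linarith [hwC c hc]
  obtain ⟨⟨xhat, yhat, u⟩, hz, hmax⟩ := hS.exists_isMaxOn ⟨_, hu0⟩ f hbd
  have hle : F xbar + C ⊆ F xhat + C :=
    (hincl xhat).2 fun k => ⟨u k, hz.2.1 k, y k + -u k, hz.2.2 k, by simp⟩
  refine ⟨xhat, yhat, hz.1, hle, le_antisymm (le_sSup ⟨xhat, yhat, hz.1, hle, rfl⟩) (sSup_le ?_)⟩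
  rintro _ ⟨x, y', hy', h, rfl⟩
  obtain ⟨u', hu'⟩ := hmem x y' hy' h
  exact EReal.coe_le_coe_iff.2 (hmax _ hu')
end

section
/- Let (P) be feasible and bounded, let x̄ ∈ dom F, and let w ∈ C° belong to the polar cone of C. Suppose x̂ ∈ ℝⁿ solves the problem (P(w,x̄)), i.e., there exists ŷ ∈ F(x̂) with F(x̂) + C ⊇ F(x̄) + C and wᵀŷ = α(w,x̄). Then for every u ∈ ℝⁿ with F(u) + C ⊇ F(x̂) + C one has α(w,u) = β(w,u). -/
/-!
The inequality `β(w,u) ≤ α(w,u)` holds because `u` is itself feasible for its own problem.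
Conversely, `F(u) + C ⊇ F(x̂) + C ⊇ F(x̄) + C` gives `α(w,u) ≤ α(w,x̄) = wᵀŷ`; writing
`ŷ = y + c` with `y ∈ F(u)` and `c ∈ C`, the polarity of `w` yields
`wᵀŷ ≤ wᵀy ≤ β(w,u)`.
-/

open Matrix Set Pointwise

/-- If `x̂` solves (P(w,x̄)) for some `w ∈ C°`, then `α(w,u) = β(w,u)` for every `u`
with `F(u) ⪯ F(x̂)`. -/
theorem alpha_eq_beta_after_solving
    (n q : ℕ) (hn : 0 < n) (hq : 0 < q)
    -- C is a pointed polyhedral convex cone with nonempty interior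
    (C : Set (Fin q → ℝ))
    (hCpoly : IsPolyhedral C)
    (hCcone : ∀ c ∈ C, ∀ r : ℝ, 0 ≤ r → r • c ∈ C)
    (hCpointed : C ∩ (-C) = {0})
    (hCint : (interior C).Nonempty)
    -- F has polyhedral convex graph
    (F : (Fin n → ℝ) → Set (Fin q → ℝ))
    (hgrF : PolyhedralGraph n q F)
    -- (P) is feasible and bounded
    (hfeas : ∃ x, (F x).Nonempty)
    (hbdd : ∃ v : Fin q → ℝ, ∀ x, F x ⊆ {v} + C)
    -- x̄ ∈ dom F
    (xbar : Fin n → ℝ) (hxbar : (F xbar).Nonempty)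
    -- w belongs to the polar cone of C
    (w : Fin q → ℝ) (hw : ∀ c ∈ C, w ⬝ᵥ c ≤ 0)
    -- x̂ solves (P(w,x̄))
    (xhat : Fin n → ℝ)
    (hsol : ∃ yhat ∈ F xhat, F xbar + C ⊆ F xhat + C ∧
      ((w ⬝ᵥ yhat : ℝ) : EReal) = alpha F C w xbar) :
    ∀ u : Fin n → ℝ, F xhat + C ⊆ F u + C →
      alpha F C w u = beta F w u := by
  obtain ⟨yhat, hyhat, hbar, heq⟩ := hsol
  intro u hu
  have h0 : (0 : Fin q → ℝ) ∈ C := by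
    have h : (0 : Fin q → ℝ) ∈ C ∩ (-C) := by rw [hCpointed]; rfl
    exact h.1
  apply le_antisymm
  · -- `α(w,u) ≤ α(w,x̄)`, because every `x` feasible for `u` is feasible for `x̄`.
    have h1 : alpha F C w u ≤ alpha F C w xbar := by
      apply sSup_le_sSup
      rintro e ⟨x, y, hy, hx, he⟩
      exact ⟨x, y, hy, (hbar.trans hu).trans hx, he⟩
    -- `ŷ ∈ F(u) + C`, and dropping the summand in `C` does not decrease `w`.
    obtain ⟨y, hy, c, hc, hyc⟩ := hu ⟨yhat, hyhat, 0, h0, add_zero yhat⟩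
    have h2 : w ⬝ᵥ yhat ≤ w ⬝ᵥ y := by
      have h3 : w ⬝ᵥ yhat = w ⬝ᵥ y + w ⬝ᵥ c := by
        rw [← dotProduct_add]
        exact congrArg (w ⬝ᵥ ·) hyc.symm
      linarith [hw c hc]
    calc alpha F C w u ≤ ((w ⬝ᵥ yhat : ℝ) : EReal) := h1.trans heq.ge
      _ ≤ ((w ⬝ᵥ y : ℝ) : EReal) := EReal.coe_le_coe_iff.mpr h2
      _ ≤ beta F w u := le_sSup ⟨y, hy, rfl⟩
  · apply sSup_le_sSup
    rintro e ⟨y, hy, he⟩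
    exact ⟨u, y, hy, subset_rfl, he⟩
end

section
/- Let C ⊆ ℝ^q be a pointed polyhedral convex cone and let P₁,…,P_k be nonempty polyhedral convex subsets of ℝ^q such that P_j + C = P_j and the recession cone of P_j equals C for every j. Then conv(P₁ ∪ … ∪ P_k) is a polyhedral convex set (in particular it is closed, so it equals cl conv(P₁ ∪ … ∪ P_k)), and every extreme point of cl conv(P₁ ∪ … ∪ P_k) belongs to P_j for some j ∈ {1,…,k}. -/
/-!
The convex hull of `⋃ j, P j` is the projection onto `y` of a polyhedral set in the larger space of
pairs `(y, v)`, `v = ((y_j, t_j))_j`. Writing `P j = {x | γ_{ji} ≤ w_{ji} ⬝ᵥ x}`, that set is cut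
out by
`0 ≤ t_j`, `∑ t_j = 1`, `y = ∑ y_j`, `t_j * γ_{ji} ≤ w_{ji} ⬝ᵥ y_j`.
If `0 < t_j`, the last system says `y_j ∈ t_j • P j`. If `t_j = 0`, it says that `y_j` is a recession
direction of `P j`, hence an element of the common recession cone `C`; as `P i + C = P i` for all
`i`, the sum of all these directions can be absorbed into the remaining points
(`sum_mem_convexHull`). Projections of polyhedral sets are polyhedral by Fourier–Motzkin elimination
(`PolySet.exists_real`, `PolySet.exists_finiteDimensional`).

A polyhedral set is closed, and extreme points of the convex hull of a set lie in that set; this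
gives the two other claims.
-/

open Matrix Set Pointwise

/-- The recession cone of a set `P`:
`{d : P + λd ⊆ P for all λ > 0} ∪ {0}`. -/
def recessionCone {q : ℕ} (P : Set (Fin q → ℝ)) : Set (Fin q → ℝ) :=
  {d : Fin q → ℝ | ∀ r : ℝ, 0 < r → ∀ p ∈ P, p + r • d ∈ P} ∪ {0}

/-! ### Polyhedral sets in real vector spaces -/

/-- Coordinate-free polyhedral sets: the solution set of finitely many inequalities `γ ≤ f x`, each
encoded as a pair `(f, γ)` of a linear functional and a real number. -/
def PolySet {E : Type*} [AddCommGroup E] [Module ℝ E] (S : Set E) : Prop :=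
  ∃ s : Finset ((E →ₗ[ℝ] ℝ) × ℝ), S = {x | ∀ p ∈ s, p.2 ≤ p.1 x}

namespace PolySet

variable {E F : Type*} [AddCommGroup E] [Module ℝ E] [AddCommGroup F] [Module ℝ F]

lemma halfspace (f : E →ₗ[ℝ] ℝ) (γ : ℝ) : PolySet {x | γ ≤ f x} :=
  ⟨{(f, γ)}, by simp⟩

lemma univ : PolySet (Set.univ : Set E) := ⟨∅, by simp⟩

lemma inter {S T : Set E} (hS : PolySet S) (hT : PolySet T) : PolySet {x | x ∈ S ∧ x ∈ T} := by
  classical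
  obtain ⟨s, rfl⟩ := hS
  obtain ⟨t, rfl⟩ := hT
  refine ⟨s ∪ t, ?_⟩
  ext x
  simp only [Set.mem_ofPred_eq, Finset.mem_union, or_imp, forall_and]

lemma hyperplane (f : E →ₗ[ℝ] ℝ) (γ : ℝ) : PolySet {x | f x = γ} := by
  convert (halfspace f γ).inter (halfspace (-f) (-γ)) using 1
  ext x
  simp only [Set.mem_ofPred_eq, LinearMap.neg_apply, neg_le_neg_iff]
  exact ⟨fun h => ⟨h.ge, h.le⟩, fun h => le_antisymm h.2 h.1⟩

lemma biInter {ι : Type*} (s : Finset ι) {S : ι → Set E} (h : ∀ i ∈ s, PolySet (S i)) :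
    PolySet {x | ∀ i ∈ s, x ∈ S i} := by
  classical
  induction s using Finset.induction_on with
  | empty => simpa using univ
  | insert a s _ ih =>
    convert (h a (by simp)).inter (ih fun i hi => h i (by simp [hi])) using 1
    ext x
    simp

lemma iInter {ι : Type*} [Fintype ι] {S : ι → Set E} (h : ∀ i, PolySet (S i)) :
    PolySet {x | ∀ i, x ∈ S i} := by
  simpa using biInter Finset.univ fun i _ => h i

lemma imp {a : Prop} {S : Set E} (h : PolySet S) : PolySet {x | a → x ∈ S} := by
  by_cases ha : a
  · simpa [ha] using h
  · simpa [ha] using univ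

lemma preimage (f : E →ₗ[ℝ] F) {S : Set F} (hS : PolySet S) : PolySet {x | f x ∈ S} := by
  obtain ⟨s, rfl⟩ := hS
  exact biInter s fun p _ => halfspace (p.1 ∘ₗ f) p.2

lemma convex {S : Set E} (hS : PolySet S) : Convex ℝ S := by
  obtain ⟨s, rfl⟩ := hS
  simp only [Set.ofPred_forall]
  exact convex_iInter₂ fun p _ => convex_halfSpace_ge p.1.isLinear _

/-! ### Fourier–Motzkin elimination -/

/-- One-dimensional Helly: finitely many lower bounds `l` and upper bounds `u` for a real number are
simultaneously satisfiable as soon as they are pairwise compatible. -/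
lemma exists_between_finset {ι : Type*} (s t : Finset ι) (l u : ι → ℝ)
    (h : ∀ i ∈ s, ∀ j ∈ t, l i ≤ u j) :
    ∃ r : ℝ, (∀ i ∈ s, l i ≤ r) ∧ ∀ j ∈ t, r ≤ u j := by
  rcases s.eq_empty_or_nonempty with rfl | hs
  · rcases t.eq_empty_or_nonempty with rfl | ht
    · exact ⟨0, by simp⟩
    · exact ⟨t.inf' ht u, by simp, fun j hj => Finset.inf'_le u hj⟩
  · exact ⟨s.sup' hs l, fun i hi => Finset.le_sup' l hi,
      fun j hj => Finset.sup'_le hs l fun i hi => h i hi j hj⟩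

/-- Fourier–Motzkin elimination of one real variable. -/
lemma exists_real {S : Set (E × ℝ)} (hS : PolySet S) : PolySet {x | ∃ t : ℝ, (x, t) ∈ S} := by
  classical
  obtain ⟨s, rfl⟩ := hS
  -- An inequality `γ ≤ f (x, t)` reads `γ ≤ g x + c * t`; it bounds `t` from below or from above
  -- according to the sign of `c`, and does not involve `t` if `c = 0`.
  let c : ((E × ℝ →ₗ[ℝ] ℝ) × ℝ) → ℝ := fun p => p.1 (0, 1)
  let g : ((E × ℝ →ₗ[ℝ] ℝ) × ℝ) → E →ₗ[ℝ] ℝ := fun p => p.1 ∘ₗ LinearMap.inl ℝ E ℝ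
  have key : ∀ p : (E × ℝ →ₗ[ℝ] ℝ) × ℝ, ∀ x t, p.1 (x, t) = g p x + c p * t := by
    intro p x t
    have : ((x, t) : E × ℝ) = (x, 0) + t • (0, 1) := by simp
    rw [this, map_add, map_smul]
    simp [g, c, mul_comm]
  have h1 : PolySet {x : E | ∀ p ∈ s, x ∈ {x | c p = 0 → x ∈ {x | p.2 ≤ g p x}}} :=
    biInter s fun p _ => imp (halfspace _ _)
  -- Compatibility of the lower bound from `p` with the upper bound from `p'`, linear in `x`.
  have h2 : PolySet {x : E | ∀ p ∈ s, x ∈ {x | ∀ p' ∈ s, x ∈ {x | (0 < c p ∧ c p' < 0) →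
      x ∈ {x | p.2 / c p - p'.2 / c p' ≤ ((c p)⁻¹ • g p - (c p')⁻¹ • g p') x}}}} :=
    biInter s fun p _ => biInter s fun p' _ => imp (halfspace _ _)
  convert h1.inter h2 using 1
  ext x
  simp only [Set.mem_ofPred_eq, key]
  constructor
  · rintro ⟨t, ht⟩
    refine ⟨fun p hp h0 => by simpa [h0] using ht p hp, fun p hp p' hp' ⟨hc, hc'⟩ => ?_⟩
    have e1 : (p.2 - g p x) / c p ≤ t := by
      rw [div_le_iff₀ hc]; linarith [ht p hp]
    have e2 : t ≤ (p'.2 - g p' x) / c p' := by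
      rw [le_div_iff_of_neg hc']; linarith [ht p' hp']
    simp only [LinearMap.sub_apply, LinearMap.smul_apply, smul_eq_mul, inv_mul_eq_div]
    rw [sub_div] at e1 e2
    linarith
  · rintro ⟨h0, h⟩
    obtain ⟨t, hl, hu⟩ := exists_between_finset {p ∈ s | 0 < c p} {p ∈ s | c p < 0}
      (fun p => (p.2 - g p x) / c p) (fun p => (p.2 - g p x) / c p) (by
        intro p hp p' hp'
        rw [Finset.mem_filter] at hp hp'
        have := h p hp.1 p' hp'.1 ⟨hp.2, hp'.2⟩
        simp only [LinearMap.sub_apply, LinearMap.smul_apply, smul_eq_mul, inv_mul_eq_div] at this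
        rw [sub_div, sub_div]
        linarith)
    refine ⟨t, fun p hp => ?_⟩
    rcases lt_trichotomy (c p) 0 with hc | hc | hc
    · have := hu p (by simp [hp, hc])
      rw [le_div_iff_of_neg hc] at this
      linarith
    · simpa [hc] using h0 p hp hc
    · have := hl p (by simp [hp, hc])
      rw [div_le_iff₀ hc] at this
      linarith

lemma exists_fin (n : ℕ) {S : Set (E × (Fin n → ℝ))} (hS : PolySet S) :
    PolySet {x | ∃ v, (x, v) ∈ S} := by
  induction n with
  | zero =>
    convert hS.preimage (LinearMap.inl ℝ E (Fin 0 → ℝ)) using 1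
    ext x
    refine ⟨fun ⟨v, hv⟩ => ?_, fun h => ⟨0, h⟩⟩
    rwa [Subsingleton.elim v 0] at hv
  | succ n ih =>
    let L : ((E × (Fin n → ℝ)) × ℝ) →ₗ[ℝ] E × (Fin (n + 1) → ℝ) :=
      { toFun := fun z => (z.1.1, Fin.cons z.2 z.1.2)
        map_add' := fun a b => by
          ext i
          · rfl
          · refine Fin.cases ?_ (fun i => ?_) i <;> simp
        map_smul' := fun r a => by
          ext i
          · rfl
          · refine Fin.cases ?_ (fun i => ?_) i <;> simp }
    convert ih (hS.preimage L).exists_real using 1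
    ext x
    simp only [Set.mem_ofPred_eq, L, LinearMap.coe_mk, AddHom.coe_mk]
    constructor
    · rintro ⟨v, hv⟩
      exact ⟨Fin.tail v, v 0, by simpa using hv⟩
    · rintro ⟨v, t, h⟩
      exact ⟨_, h⟩

/-- Projections of polyhedral sets along finite-dimensional spaces are polyhedral. -/
lemma exists_finiteDimensional [FiniteDimensional ℝ F] {S : Set (E × F)} (hS : PolySet S) :
    PolySet {x | ∃ v, (x, v) ∈ S} := by
  let e := (Module.finBasis ℝ F).equivFun
  convert exists_fin _ (hS.preimage
    (LinearMap.prodMap (LinearMap.id : E →ₗ[ℝ] E) e.symm.toLinearMap)) using 1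
  ext x
  simp only [Set.mem_ofPred_eq, LinearMap.prodMap_apply, LinearMap.id_apply,
    LinearEquiv.coe_coe]
  exact e.symm.surjective.exists

lemma isPolyhedral {q : ℕ} {S : Set (Fin q → ℝ)} (hS : PolySet S) : IsPolyhedral S := by
  obtain ⟨s, rfl⟩ := hS
  have key : ∀ (f : (Fin q → ℝ) →ₗ[ℝ] ℝ) (x : Fin q → ℝ),
      (fun i => f (Pi.single i 1)) ⬝ᵥ x = f x := by
    intro f x
    rw [LinearMap.pi_apply_eq_sum_univ f x]
    simp only [dotProduct, smul_eq_mul]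
    refine Finset.sum_congr rfl fun i _ => ?_
    rw [mul_comm]
    congr 2
    ext j
    simp [Pi.single_apply, eq_comm]
  refine ⟨s.card, fun i l => (s.equivFin.symm i).1.1 (Pi.single l 1),
    fun i => (s.equivFin.symm i).1.2, ?_⟩
  ext x
  simp only [Set.mem_ofPred_eq, key]
  constructor
  · exact fun h i => h _ (s.equivFin.symm i).2
  · intro h p hp
    simpa using h (s.equivFin ⟨p, hp⟩)

end PolySet

lemma IsPolyhedral.isClosed {q : ℕ} {S : Set (Fin q → ℝ)} (hS : IsPolyhedral S) :
    IsClosed S := by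
  obtain ⟨m, w, γ, rfl⟩ := hS
  simp only [Set.ofPred_forall]
  refine isClosed_iInter fun i => isClosed_le continuous_const ?_
  unfold dotProduct
  fun_prop

/-! ### The convex hull as a projection -/

/-- `y_j ∈ t_j • P j` for `0 < t_j`, while the `y_j` with `t_j = 0` are directions in `C`. Their sum
is absorbed by the sets with positive weight. -/
lemma sum_mem_convexHull {q k : ℕ} {C : Set (Fin q → ℝ)} {P : Fin k → Set (Fin q → ℝ)}
    (hPne : ∀ j, (P j).Nonempty) (hPC : ∀ j, P j + C = P j)
    (y : Fin k → Fin q → ℝ) (t : Fin k → ℝ) (ht : ∀ j, 0 ≤ t j) (hsum : ∑ j, t j = 1)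
    (hpos : ∀ j, 0 < t j → (t j)⁻¹ • y j ∈ P j) (hzero : ∀ j, t j = 0 → y j ∈ C) :
    ∑ j, y j ∈ convexHull ℝ (⋃ j, P j) := by
  classical
  have absorb : ∀ j, ∀ p ∈ P j, ∀ s : Finset (Fin k), (∀ i ∈ s, y i ∈ C) →
      p + ∑ i ∈ s, y i ∈ P j := by
    intro j p hp s
    induction s using Finset.induction_on with
    | empty => simpa using hp
    | insert a s ha ih =>
      intro h
      rw [Finset.sum_insert ha, add_comm (y a), ← add_assoc, ← hPC j]
      exact Set.add_mem_add (ih fun i hi => h i (by simp [hi])) (h a (by simp))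
  set d := ∑ i with t i = 0, y i with hd
  -- For `t_j = 0` the point taken in `P j` has weight zero, hence is arbitrary.
  let z : Fin k → Fin q → ℝ := fun j => if t j = 0 then (hPne j).some else (t j)⁻¹ • y j + d
  have hz : ∀ j, z j ∈ P j := by
    intro j
    by_cases h : t j = 0
    · simpa [z, h] using (hPne j).some_mem
    · simp only [z, h, if_false]
      refine absorb j _ (hpos j (lt_of_le_of_ne (ht j) (Ne.symm h))) _ fun i hi => hzero i ?_
      simpa using hi
  have hy : ∑ j, y j = ∑ j, t j • z j := by
    have e : ∀ j, t j • z j = (if t j = 0 then 0 else y j) + t j • d := by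
      intro j
      by_cases h : t j = 0
      · simp [h]
      · simp [z, h, smul_smul]
    simp only [e, Finset.sum_add_distrib, ← Finset.sum_smul, hsum, one_smul, hd,
      Finset.sum_filter]
    rw [← Finset.sum_add_distrib]
    refine Finset.sum_congr rfl fun j _ => ?_
    by_cases h : t j = 0 <;> simp [h]
  rw [hy]
  exact (convex_convexHull ℝ _).sum_mem (fun j _ => ht j) hsum fun j _ =>
    subset_convexHull ℝ _ (Set.mem_iUnion.2 ⟨j, hz j⟩)

/-- The convex hull is the projection to the first factor of the polyhedral set `S` of pairs `(y, v)`,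
`v = ((y_j, t_j))_j`, constructed in the proof. -/
lemma poly_convexHull {q k : ℕ} {C : Set (Fin q → ℝ)} {P : Fin k → Set (Fin q → ℝ)}
    (hPne : ∀ j, (P j).Nonempty) (hPpoly : ∀ j, IsPolyhedral (P j))
    (hPC : ∀ j, P j + C = P j) (hPrec : ∀ j, recessionCone (P j) = C) :
    PolySet (convexHull ℝ (⋃ j, P j)) := by
  classical
  choose m w γ hP using hPpoly
  let V := Fin k → (Fin q → ℝ) × ℝ
  let Y : Fin k → ((Fin q → ℝ) × V) →ₗ[ℝ] (Fin q → ℝ) := fun j =>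
    LinearMap.fst ℝ _ _ ∘ₗ LinearMap.proj j ∘ₗ LinearMap.snd ℝ _ _
  let T : Fin k → ((Fin q → ℝ) × V) →ₗ[ℝ] ℝ := fun j =>
    LinearMap.snd ℝ _ _ ∘ₗ LinearMap.proj j ∘ₗ LinearMap.snd ℝ _ _
  let D : (Fin q → ℝ) → (Fin q → ℝ) →ₗ[ℝ] ℝ := fun a => dotProductBilin ℝ ℝ a
  let S : Set ((Fin q → ℝ) × V) :=
    {x | (∀ j, 0 ≤ (x.2 j).2) ∧ ∑ j, (x.2 j).2 = 1 ∧
      (∀ j i, (x.2 j).2 * γ j i ≤ w j i ⬝ᵥ (x.2 j).1) ∧ ∑ j, (x.2 j).1 = x.1}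
  have hS : PolySet S := by
    have h1 := PolySet.iInter fun j => PolySet.halfspace (T j) 0
    have h2 := PolySet.hyperplane (∑ j, T j) 1
    have h3 := PolySet.iInter fun j => PolySet.iInter fun i =>
      PolySet.halfspace (D (w j i) ∘ₗ Y j - γ j i • T j) 0
    have h4 := PolySet.iInter fun l => PolySet.hyperplane
      (LinearMap.proj l ∘ₗ (∑ j, Y j - LinearMap.fst ℝ (Fin q → ℝ) V)) 0
    convert h1.inter (h2.inter (h3.inter h4)) using 1
    ext x
    simp [S, T, Y, D, V, mul_comm, funext_iff, sub_eq_zero]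
  convert hS.exists_finiteDimensional using 1
  apply Set.Subset.antisymm
  · refine convexHull_min ?_ hS.exists_finiteDimensional.convex
    refine Set.iUnion_subset fun j x hx => ⟨Pi.single j (x, 1), ?_⟩
    have hx' : ∀ i, γ j i ≤ w j i ⬝ᵥ x := by
      rw [hP j] at hx
      exact hx
    have f1 : ∀ i, ((Pi.single j (x, 1) : V) i).1 = if i = j then x else 0 := by
      intro i
      by_cases h : i = j
      · subst h; simp
      · simp [h]
    have f2 : ∀ i, ((Pi.single j (x, 1) : V) i).2 = if i = j then 1 else 0 := by
      intro i
      by_cases h : i = j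
      · subst h; simp
      · simp [h]
    refine ⟨fun i => ?_, ?_, fun i l => ?_, ?_⟩
    · simp only [f2]; split_ifs <;> norm_num
    · simp [f2]
    · simp only [f1, f2]
      by_cases h : i = j
      · subst h; simpa using hx' l
      · simp [h]
    · simp [f1]
  · rintro y ⟨v, hv0, hv1, hvP, hy⟩
    have hy' : ∑ j, (v j).1 = y := hy
    rw [← hy']
    refine sum_mem_convexHull hPne hPC (fun j => (v j).1) (fun j => (v j).2) hv0 hv1 ?_ ?_
    · intro j hj
      rw [hP j]
      intro i
      rw [dotProduct_smul, smul_eq_mul, inv_mul_eq_div, le_div_iff₀ hj, mul_comm]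
      exact hvP j i
    · intro j hj
      rw [← hPrec j]
      refine Or.inl fun r hr p hp => ?_
      rw [hP j] at hp ⊢
      intro i
      have h := hvP j i
      rw [hj, zero_mul] at h
      rw [dotProduct_add, dotProduct_smul, smul_eq_mul]
      have := hp i
      have := mul_nonneg hr.le h
      linarith

/-- If `P₁,…,P_k` are nonempty polyhedral convex sets with `P_j + C = P_j` and
recession cone equal to the pointed polyhedral convex cone `C`, then
`conv(P₁ ∪ … ∪ P_k)` is polyhedral convex (hence closed, equal to its closed
convex hull) and every extreme point of `cl conv(P₁ ∪ … ∪ P_k)` lies in some `P_j`. -/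
theorem extreme_points_of_convex_hull_of_union
    (q : ℕ) (hq : 0 < q)
    -- C is a pointed polyhedral convex cone
    (C : Set (Fin q → ℝ))
    (hCpoly : IsPolyhedral C)
    (hCcone : ∀ c ∈ C, ∀ r : ℝ, 0 ≤ r → r • c ∈ C)
    (hCpointed : C ∩ (-C) = {0})
    -- the sets P₁,…,P_k
    (k : ℕ) (hk : 0 < k)
    (P : Fin k → Set (Fin q → ℝ))
    (hPne : ∀ j, (P j).Nonempty)
    (hPpoly : ∀ j, IsPolyhedral (P j))
    (hPC : ∀ j, P j + C = P j)
    (hPrec : ∀ j, recessionCone (P j) = C) :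
    IsPolyhedral (convexHull ℝ (⋃ j, P j)) ∧
    convexHull ℝ (⋃ j, P j) = closure (convexHull ℝ (⋃ j, P j)) ∧
    ∀ z ∈ Set.extremePoints ℝ (closure (convexHull ℝ (⋃ j, P j))),
      ∃ j, z ∈ P j := by
  have hpoly := (poly_convexHull hPne hPpoly hPC hPrec).isPolyhedral
  have hcl := hpoly.isClosed.closure_eq
  refine ⟨hpoly, hcl.symm, fun z hz => ?_⟩
  rw [hcl] at hz
  exact Set.mem_iUnion.1 (extremePoints_convexHull_subset hz)
end

section
/- Let F : ℝⁿ ⇉ ℝ^q be a set-valued map whose graph gr F := {(x,y) : y ∈ F(x)} is nonempty polyhedral convex, and let C ⊆ ℝ^q be a pointed polyhedral convex cone with nonempty interior. Suppose dom F is a bounded set and for every x ∈ ℝⁿ there exists v_x ∈ ℝ^q with F(x) ⊆ {v_x} + C. Then problem (P) is bounded: there exists a single v ∈ ℝ^q with F(x) ⊆ {v} + C for all x ∈ ℝⁿ. -/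
/-!
Write `C = {y | 0 ≤ w i ⬝ᵥ y for all i}` (the cone property forces all right-hand sides to
be replaceable by `0`) and `gr F = {(x, y) | b ≤ A x + B y}`. It is enough to bound each functional
`y ↦ w i ⬝ᵥ y` from below on the range of `F`: a sufficiently large negative multiple of an
interior point of `C` then serves as the common lower bound `v`.

Fix `x₀` with `F x₀` nonempty. Any `d` with `B d ≥ 0` is a recession direction of `F x₀`, and
`w i` is bounded below on `F x₀ ⊆ v₀ + C`, so `w i ⬝ᵥ d ≥ 0`. By Farkas' lemma
(`farkas_functionals`) `w i = Bᵀ l` for some `l ≥ 0`, a multiplier that does not depend on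
`x`. Hence `w i ⬝ᵥ y = l ⬝ᵥ B y ≥ l ⬝ᵥ b - l ⬝ᵥ A x` on the whole graph, and the right-hand side
is bounded below because `dom F` is bounded.
-/

open Matrix Set Pointwise

/-- Farkas' lemma for finitely many linear functionals, by induction on their number. If `g` is
not already nonnegative on the cone cut out by all but the last functional `f₀`, there is `y₀` in
that cone with `g y₀ < 0` and `f₀ y₀ = -1`; composing everything with the projection
`y ↦ y + f₀ y • y₀` onto `ker f₀` eliminates `f₀`. -/
lemma farkas_functionals {V : Type*} [AddCommGroup V] [Module ℝ V] (m : ℕ) :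
    ∀ (f : Fin m → V →ₗ[ℝ] ℝ) (g : V →ₗ[ℝ] ℝ), (∀ y, (∀ i, 0 ≤ f i y) → 0 ≤ g y) →
      ∃ l : Fin m → ℝ, (∀ i, 0 ≤ l i) ∧ ∀ y, g y = ∑ i, l i * f i y := by
  induction m with
  | zero =>
    intro f g h
    refine ⟨fun _ => 0, fun _ => le_rfl, fun y => ?_⟩
    have h1 := h y (fun i => i.elim0)
    have h2 := h (-y) (fun i => i.elim0)
    rw [map_neg] at h2
    simp only [Finset.univ_eq_empty, Finset.sum_empty]
    linarith
  | succ m ih =>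
    intro f g h
    by_cases hc : ∀ y, (∀ i : Fin m, 0 ≤ f i.castSucc y) → 0 ≤ g y
    · obtain ⟨l, hl, hg⟩ := ih (fun i => f i.castSucc) g hc
      refine ⟨Fin.snoc l 0, fun i => ?_, fun y => ?_⟩
      · refine Fin.lastCases ?_ (fun j => ?_) i
        · simp
        · simpa using hl j
      · rw [Fin.sum_univ_castSucc, hg y]
        simp
    · push Not at hc
      obtain ⟨y₁, hy₁, hgy₁⟩ := hc
      have hlast : f (Fin.last m) y₁ < 0 := by
        by_contra! hcon
        exact absurd (h y₁ (fun i => Fin.lastCases hcon hy₁ i)) (not_le.mpr hgy₁)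
      set s : ℝ := -(f (Fin.last m) y₁)⁻¹ with hs
      have hspos : 0 < s := by
        rw [hs]; exact neg_pos.mpr (inv_lt_zero.mpr hlast)
      obtain ⟨y₀, hy₀⟩ : ∃ y₀, y₀ = s • y₁ := ⟨_, rfl⟩
      have hfl : f (Fin.last m) y₀ = -1 := by
        rw [hy₀, map_smul, smul_eq_mul, hs, neg_mul, inv_mul_cancel₀ hlast.ne]
      have hf0 : ∀ i : Fin m, 0 ≤ f i.castSucc y₀ := fun i => by
        rw [hy₀, map_smul, smul_eq_mul]; exact mul_nonneg hspos.le (hy₁ i)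
      have hg0 : g y₀ < 0 := by
        rw [hy₀, map_smul, smul_eq_mul]; exact mul_neg_of_pos_of_neg hspos hgy₁
      obtain ⟨l, hl, hg⟩ := ih
        (fun i => f i.castSucc + (f i.castSucc y₀) • f (Fin.last m))
        (g + (g y₀) • f (Fin.last m)) (by
          intro y hy
          have hz := h (y + f (Fin.last m) y • y₀) (fun i => by
            refine Fin.lastCases ?_ (fun j => ?_) i
            · simp [hfl]
            · have := hy j
              simp only [LinearMap.add_apply, LinearMap.smul_apply, smul_eq_mul] at this
              simp only [map_add, map_smul, smul_eq_mul]
              linarith)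
          simp only [map_add, map_smul, smul_eq_mul] at hz
          simp only [LinearMap.add_apply, LinearMap.smul_apply, smul_eq_mul]
          linarith)
      refine ⟨Fin.snoc l (∑ i, l i * f i.castSucc y₀ - g y₀), fun i => ?_, fun y => ?_⟩
      · refine Fin.lastCases ?_ (fun j => ?_) i
        · have : 0 ≤ ∑ i, l i * f i.castSucc y₀ :=
            Finset.sum_nonneg fun i _ => mul_nonneg (hl i) (hf0 i)
          simp only [Fin.snoc_last]
          linarith
        · simpa using hl j
      · have hy := hg y
        simp only [LinearMap.add_apply, LinearMap.smul_apply, smul_eq_mul, mul_add,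
          Finset.sum_add_distrib] at hy
        rw [Fin.sum_univ_castSucc]
        simp only [Fin.snoc_castSucc, Fin.snoc_last, sub_mul, Finset.sum_mul, mul_assoc]
        linarith

/-- A nonnegative functional on a set `C` is strictly positive at interior points of `C`, unless
it vanishes identically. -/
lemma dotProduct_pos_of_mem_interior {q : ℕ} {C : Set (Fin q → ℝ)} {u e : Fin q → ℝ}
    (hu : ∀ c ∈ C, 0 ≤ u ⬝ᵥ c) (he : e ∈ interior C) (hu0 : u ≠ 0) : 0 < u ⬝ᵥ e := by
  have hcont : Filter.Tendsto (fun t : ℝ => e - t • u) (nhdsWithin 0 (Ioi 0)) (nhds e) := by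
    have : Continuous (fun t : ℝ => e - t • u) := by fun_prop
    simpa using (this.tendsto 0).mono_left nhdsWithin_le_nhds
  obtain ⟨t, htC, ht⟩ :=
    ((hcont.eventually (mem_interior_iff_mem_nhds.mp he)).and self_mem_nhdsWithin).exists
  have h1 := hu _ htC
  rw [dotProduct_sub, dotProduct_smul, smul_eq_mul] at h1
  have h2 : 0 < u ⬝ᵥ u :=
    lt_of_le_of_ne (Finset.sum_nonneg fun i _ => mul_self_nonneg (u i))
      (fun h => hu0 (dotProduct_self_eq_zero.mp h.symm))
  have h3 : 0 < t * (u ⬝ᵥ u) := mul_pos ht h2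
  linarith

/-- A functional bounded below on one nonempty value of a polyhedral map with bounded domain is
bounded below on the whole range. -/
lemma exists_uniform_bound {n q m : ℕ} (A : Matrix (Fin m) (Fin n) ℝ)
    (B : Matrix (Fin m) (Fin q) ℝ) (b : Fin m → ℝ) (F : (Fin n → ℝ) → Set (Fin q → ℝ))
    (hF : ∀ x y, y ∈ F x ↔ b ≤ A *ᵥ x + B *ᵥ y)
    (hdom : Bornology.IsBounded {x : Fin n → ℝ | (F x).Nonempty})
    (u : Fin q → ℝ) (x₀ : Fin n → ℝ) (hx₀ : (F x₀).Nonempty) (k : ℝ)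
    (hk : ∀ y ∈ F x₀, k ≤ u ⬝ᵥ y) : ∃ K : ℝ, ∀ x, ∀ y ∈ F x, K ≤ u ⬝ᵥ y := by
  obtain ⟨y₀, hy₀⟩ := hx₀
  have hrec : ∀ d : Fin q → ℝ, (∀ i, 0 ≤ (B *ᵥ d) i) → 0 ≤ u ⬝ᵥ d := by
    intro d hd
    by_contra! hneg
    -- Moving far enough from `y₀` in direction `d` brings `u` below `k`.
    have hray : ∀ t : ℝ, 0 ≤ t → k ≤ u ⬝ᵥ y₀ + t * (u ⬝ᵥ d) := by
      intro t ht
      have : y₀ + t • d ∈ F x₀ := by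
        rw [hF] at hy₀ ⊢
        intro i
        have h1 := hy₀ i
        have h2 := mul_nonneg ht (hd i)
        simp only [mulVec_add, mulVec_smul, Pi.add_apply, Pi.smul_apply, smul_eq_mul] at h1 ⊢
        linarith
      have := hk _ this
      rwa [dotProduct_add, dotProduct_smul, smul_eq_mul] at this
    have h0 := hray 0 le_rfl
    have h1 := hray ((u ⬝ᵥ y₀ - k + 1) / (-(u ⬝ᵥ d)))
      (div_nonneg (by linarith) (by linarith))
    have h2 : (u ⬝ᵥ y₀ - k + 1) / (-(u ⬝ᵥ d)) * (u ⬝ᵥ d) = -(u ⬝ᵥ y₀ - k + 1) := by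
      rw [div_neg, neg_mul, div_mul_cancel₀ _ hneg.ne]
    linarith
  obtain ⟨l, hl, hg⟩ := farkas_functionals m
    (fun i => LinearMap.proj i ∘ₗ B.mulVecLin) (dotProductBilin ℝ ℝ u)
    (fun y hy => hrec y hy)
  have hg' : ∀ y, u ⬝ᵥ y = l ⬝ᵥ (B *ᵥ y) := hg
  have hcont : Continuous (fun x : Fin n → ℝ => l ⬝ᵥ (A *ᵥ x)) := by fun_prop
  obtain ⟨M, hM⟩ := hdom.isCompact_closure.bddAbove_image hcont.continuousOn
  refine ⟨l ⬝ᵥ b - M, fun x y hy => ?_⟩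
  have h1 : l ⬝ᵥ (A *ᵥ x) ≤ M := hM ⟨x, subset_closure ⟨y, hy⟩, rfl⟩
  have h2 : l ⬝ᵥ b ≤ l ⬝ᵥ (A *ᵥ x + B *ᵥ y) :=
    dotProduct_le_dotProduct_of_nonneg_left ((hF x y).mp hy) hl
  rw [dotProduct_add, ← hg'] at h2
  linarith

/-- If `dom F` is bounded and each value `F(x)` is bounded below in the sense that
`F(x) ⊆ {v_x} + C` for some `v_x`, then problem (P) is bounded: a single lower
bound `v` works for all `x`. -/
theorem boundedness_criterion
    (n q : ℕ) (hn : 0 < n) (hq : 0 < q)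
    -- C is a pointed polyhedral convex cone with nonempty interior
    (C : Set (Fin q → ℝ))
    (hCpoly : IsPolyhedral C)
    (hCcone : ∀ c ∈ C, ∀ r : ℝ, 0 ≤ r → r • c ∈ C)
    (hCpointed : C ∩ (-C) = {0})
    (hCint : (interior C).Nonempty)
    -- F has a nonempty polyhedral convex graph
    (F : (Fin n → ℝ) → Set (Fin q → ℝ))
    (hgrF : PolyhedralGraph n q F)
    (hgrne : ∃ x, (F x).Nonempty)
    -- dom F is bounded
    (hdom : Bornology.IsBounded {x : Fin n → ℝ | (F x).Nonempty})
    -- every value is bounded below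
    (hval : ∀ x : Fin n → ℝ, ∃ vx : Fin q → ℝ, F x ⊆ {vx} + C) :
    ∃ v : Fin q → ℝ, ∀ x : Fin n → ℝ, F x ⊆ {v} + C := by
  obtain ⟨p, w, γ, rfl⟩ := hCpoly
  obtain ⟨m, A, B, b, hF⟩ := hgrF
  obtain ⟨x₀, hx₀⟩ := hgrne
  obtain ⟨v₀, hv₀⟩ := hval x₀
  obtain ⟨e, he⟩ := hCint
  have hγ : ∀ i, γ i ≤ 0 := fun i => by
    simpa using hCcone e (interior_subset he) 0 le_rfl i
  have hw : ∀ i, ∀ c ∈ {y : Fin q → ℝ | ∀ i, γ i ≤ w i ⬝ᵥ y}, 0 ≤ w i ⬝ᵥ c := by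
    intro i c hc
    by_contra! hneg
    -- At this multiple of `c` the functional takes the value `γ i - 1`.
    have h1 := hCcone c hc ((γ i - 1) / (w i ⬝ᵥ c))
      (div_nonneg_of_nonpos (by linarith [hγ i]) hneg.le) i
    rw [dotProduct_smul, smul_eq_mul, div_mul_cancel₀ _ hneg.ne] at h1
    linarith
  have hbd : ∀ i, ∃ K : ℝ, ∀ x, ∀ y ∈ F x, K ≤ w i ⬝ᵥ y := fun i =>
    exists_uniform_bound A B b F hF hdom (w i) x₀ hx₀ (w i ⬝ᵥ v₀) (by
      intro y hy
      obtain ⟨_, rfl, c, hc, rfl⟩ := hv₀ hy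
      have := hw i c hc
      simp only [dotProduct_add]
      linarith)
  choose K hK using hbd
  have ht : ∀ i, ∃ t : ℝ, ∀ s ≥ t, ∀ x, ∀ y ∈ F x, 0 ≤ w i ⬝ᵥ y + s * (w i ⬝ᵥ e) := by
    intro i
    by_cases hi : w i = 0
    · exact ⟨0, fun s _ x y _ => by simp [hi]⟩
    · have hpos := dotProduct_pos_of_mem_interior (hw i) he hi
      refine ⟨-K i / (w i ⬝ᵥ e), fun s hs x y hy => ?_⟩
      have h1 := (div_le_iff₀ hpos).mp hs
      linarith [hK i x y hy]
  choose t ht using ht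
  obtain ⟨T, hT⟩ := (Set.finite_range t).bddAbove
  refine ⟨-(T • e), fun x y hy => ?_⟩
  refine ⟨-(T • e), rfl, y + T • e, fun i => ?_, by simp⟩
  have := ht i T (hT ⟨i, rfl⟩) x y hy
  rw [dotProduct_add, dotProduct_smul, smul_eq_mul]
  linarith [hγ i]
end
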